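/- arXiv:1205.5902 — 6 statements merged into one kernel-verified Lean document; each statement's English description precedes it below -/
import Mathlib

section
/- If α and β are the critical itineraries τ_{(a,p,−)}(p) and τ_{(a,p,+)}(p) of a pair of uniform overlapping functions f_{(a,p,±)} (with 1 < a ≤ 2 and 1 − 1/a ≤ p ≤ 1/a), then (α,β) is an admissible pair and is non-null, i.e., h(Ω_{(α,β)}) > 0. -/
/-!
The maps `f_{(a,p,±)}` stretch distances by `a > 1` on each branch. Hence two points `x < y` of
`[0,1]` cannot share the first bits of their itineraries for long: as long as the bits agree the
distance grows like `a ^ k (y - x)`, which is at most `1`, and at the first disagreement the smaller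
point must carry the bit `0`. This holds for any mixture of the two maps, because all that is used
is that a bit `0` forces `u ≤ p` and a bit `1` forces `p ≤ u`; both are captured by `IsOrbit`, and
the resulting comparison is `IsOrbit.exists_first_diff`.

Admissibility follows by comparing each `f^n(p)` with `p`. The same comparison shows that every
itinerary `τ_{(a,p,-)}(x)` lies in `Ω_{(α,β,-)}`. Finally, with `N = ⌊a ^ n⌋`, the `N + 1` points
`i / N` have pairwise distinct itinerary prefixes of length `n + 1`, so there are at least `a ^ n`
prefixes, and the growth rate is at least `log a > 0`.
-/

open Filter Set

/-- The space of infinite binary strings. -/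
abbrev Omega := ℕ → Bool

/-- Numerical value of a bit. -/
def b2r (b : Bool) : ℝ := if b then 1 else 0

/-- The projection map `π_x(ω) = (1-x) ∑ ω_k x^k`. -/
noncomputable def proj (x : ℝ) (ω : Omega) : ℝ := (1 - x) * ∑' k : ℕ, b2r (ω k) * x ^ k

/-- The shift map. -/
def shift (ω : Omega) : Omega := fun n => ω (n + 1)

/-- Strict lexicographic order on binary strings. -/
def lexLt (σ ω : Omega) : Prop := ∃ k : ℕ, (∀ i < k, σ i = ω i) ∧ σ k = false ∧ ω k = true

/-- Lexicographic order on binary strings. -/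
def lexLe (σ ω : Omega) : Prop := σ = ω ∨ lexLt σ ω

/-- An admissible pair of binary strings. -/
def admissible (α β : Omega) : Prop :=
  α 0 = false ∧ α 1 = true ∧ β 0 = true ∧ β 1 = false ∧
  (∀ n : ℕ, ¬ (lexLt α (shift^[n] α) ∧ lexLe (shift^[n] α) β)) ∧
  (∀ n : ℕ, ¬ (lexLe α (shift^[n] β) ∧ lexLt (shift^[n] β) β))

/-- The address space `Ω_{(α,β,-)}`. -/
def addrMinus (α β : Omega) : Set Omega :=
  {ω | ∀ n : ℕ, ¬ (lexLt α (shift^[n] ω) ∧ lexLe (shift^[n] ω) β)}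

/-- The address space `Ω_{(α,β,+)}`. -/
def addrPlus (α β : Omega) : Set Omega :=
  {ω | ∀ n : ℕ, ¬ (lexLe α (shift^[n] ω) ∧ lexLt (shift^[n] ω) β)}

/-- The address space `Ω_{(α,β)}`. -/
def addr (α β : Omega) : Set Omega := addrMinus α β ∪ addrPlus α β

/-- The exponential growth rate `h(Γ) = limsup (1/n) ln |Γ_n|`, where `Γ_n` is the set of
length-`(n+1)` prefixes of members of `Γ`. -/
noncomputable def growthRate (Γ : Set Omega) : ℝ :=
  Filter.limsup
    (fun n : ℕ => Real.log ((fun ω : Omega => fun i : Fin (n + 1) => ω i.val) '' Γ).ncard / n)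
    Filter.atTop

/-- The uniform overlapping function `f_{(a,p,-)}`. -/
noncomputable def fMinus (a p : ℝ) : ℝ → ℝ := fun x => if x ≤ p then a * x else a * x + (1 - a)

/-- The uniform overlapping function `f_{(a,p,+)}`. -/
noncomputable def fPlus (a p : ℝ) : ℝ → ℝ := fun x => if x < p then a * x else a * x + (1 - a)

/-- The itinerary map `τ_{(a,p,-)}`: the `n`-th bit is `1` iff `f^n(x) ∈ I₁ = (p,1]`. -/
noncomputable def itinMinus (a p x : ℝ) : Omega := fun n => decide (p < (fMinus a p)^[n] x)

/-- The itinerary map `τ_{(a,p,+)}`: the `n`-th bit is `1` iff `f^n(x) ∈ I₁ = [p,1]`. -/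
noncomputable def itinPlus (a p x : ℝ) : Omega := fun n => decide (p ≤ (fPlus a p)^[n] x)

/-- The string `ω` codes an orbit of `x` in `[0,1]` under the two branches `u ↦ a u` (bit `0`,
allowed for `u ≤ p`) and `u ↦ a u + (1 - a)` (bit `1`, allowed for `p ≤ u`). At `u = p` either
branch is allowed, so itineraries of both `f_{(a,p,-)}` and `f_{(a,p,+)}` are covered. -/
def IsOrbit (a p x : ℝ) (ω : Omega) : Prop :=
  ∃ u : ℕ → ℝ, u 0 = x ∧ (∀ n, 0 ≤ u n ∧ u n ≤ 1) ∧
    (∀ n, u (n + 1) = a * u n + (if ω n then 1 - a else 0)) ∧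
    (∀ n, ω n = true → p ≤ u n) ∧ (∀ n, ω n = false → u n ≤ p)

/-- The codings of `x < y` differ, the first difference being `0` against `1`, at an index `k`
controlled by the distance `y - x`. -/
lemma IsOrbit.exists_first_diff {a p x y : ℝ} {σ ω : Omega} (ha : 1 < a)
    (hx : IsOrbit a p x σ) (hy : IsOrbit a p y ω) (hxy : x < y) :
    ∃ k, (∀ i < k, σ i = ω i) ∧ σ k = false ∧ ω k = true ∧ a ^ k * (y - x) ≤ 1 := by
  obtain ⟨u, u0, u1, us, ut, uf⟩ := hx
  obtain ⟨v, v0, v1, vs, vt, vf⟩ := hy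
  have growth : ∀ k, (∀ i < k, σ i = ω i) → v k - u k = a ^ k * (y - x) := by
    intro k
    induction k with
    | zero => intro _; simp [u0, v0]
    | succ k ih =>
      intro h
      have h1 := ih fun i hi => h i (by omega)
      rw [us, vs, h k (by omega), pow_succ]
      linear_combination a * h1
  have hne : ∃ k, σ k ≠ ω k := by
    by_contra! hcon
    obtain ⟨k, hk⟩ := pow_unbounded_of_one_lt (1 / (y - x)) ha
    have h1 := growth k fun i _ => hcon i
    rw [div_lt_iff₀ (by linarith)] at hk
    linarith [(u1 k).1, (v1 k).2]
  classical
  have hmin : ∀ i < Nat.find hne, σ i = ω i := fun i hi => by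
    simpa using Nat.find_min hne hi
  have hd := Nat.find_spec hne
  generalize Nat.find hne = k at hmin hd
  have h1 := growth k hmin
  have hpos : 0 < a ^ k * (y - x) := mul_pos (by positivity) (by linarith)
  refine ⟨k, hmin, ?_⟩
  have hle : a ^ k * (y - x) ≤ 1 := by linarith [(u1 k).1, (v1 k).2]
  cases hs : σ k <;> cases ho : ω k
  · simp [hs, ho] at hd
  · exact ⟨rfl, rfl, hle⟩
  · linarith [ut k hs, vf k ho]
  · simp [hs, ho] at hd

lemma IsOrbit.lexLt_of_lt {a p x y : ℝ} {σ ω : Omega} (ha : 1 < a)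
    (hx : IsOrbit a p x σ) (hy : IsOrbit a p y ω) (hxy : x < y) : lexLt σ ω := by
  obtain ⟨k, h1, h2, h3, -⟩ := hx.exists_first_diff ha hy hxy
  exact ⟨k, h1, h2, h3⟩

lemma lexLt_irrefl (σ : Omega) : ¬ lexLt σ σ := by
  rintro ⟨k, -, h1, h2⟩
  simp [h1] at h2

lemma lexLt_asymm {σ ω : Omega} (h : lexLt σ ω) : ¬ lexLt ω σ := by
  obtain ⟨k, h1, h2, h3⟩ := h
  rintro ⟨l, g1, g2, g3⟩
  rcases lt_trichotomy k l with hkl | rfl | hkl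
  · have := g1 k hkl; simp_all
  · simp_all
  · have := h1 l hkl; simp_all

lemma lexLt_not_le {σ ω : Omega} (h : lexLt σ ω) : ¬ lexLe ω σ := by
  rintro (rfl | h')
  · exact lexLt_irrefl _ h
  · exact lexLt_asymm h h'

lemma shift_iterate (ω : Omega) (n k : ℕ) : shift^[n] ω k = ω (k + n) := by
  induction n generalizing k with
  | zero => rfl
  | succ n ih =>
    rw [Function.iterate_succ_apply', shift, ih]
    congr 1
    omega

lemma shift_itinMinus (a p x : ℝ) (n : ℕ) :
    shift^[n] (itinMinus a p x) = itinMinus a p ((fMinus a p)^[n] x) := by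
  funext k
  rw [shift_iterate]
  simp only [itinMinus, Function.iterate_add_apply]

lemma shift_itinPlus (a p x : ℝ) (n : ℕ) :
    shift^[n] (itinPlus a p x) = itinPlus a p ((fPlus a p)^[n] x) := by
  funext k
  rw [shift_iterate]
  simp only [itinPlus, Function.iterate_add_apply]

section Overlapping

variable {a p : ℝ}

lemma branch_zero_mem (ha1 : 1 < a) (hp2 : p ≤ 1 / a) {x : ℝ} (hx : x ∈ Icc (0 : ℝ) 1)
    (h : x ≤ p) : a * x ∈ Icc (0 : ℝ) 1 := by
  have h2 : a * p ≤ 1 := by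
    rw [le_div_iff₀ (by linarith)] at hp2; linarith
  exact ⟨mul_nonneg (by linarith) hx.1, by nlinarith⟩

lemma branch_one_mem (ha1 : 1 < a) (hp1 : 1 - 1 / a ≤ p) {x : ℝ} (hx : x ∈ Icc (0 : ℝ) 1)
    (h : p ≤ x) : a * x + (1 - a) ∈ Icc (0 : ℝ) 1 := by
  have h2 : a - 1 ≤ a * p := by
    have h3 := mul_le_mul_of_nonneg_left hp1 (show (0 : ℝ) ≤ a by linarith)
    have h4 : a * (1 - 1 / a) = a - 1 := by field_simp
    linarith
  exact ⟨by nlinarith, by nlinarith [hx.2]⟩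

lemma fMinus_mem (ha1 : 1 < a) (hp1 : 1 - 1 / a ≤ p) (hp2 : p ≤ 1 / a) {x : ℝ}
    (hx : x ∈ Icc (0 : ℝ) 1) (n : ℕ) : (fMinus a p)^[n] x ∈ Icc (0 : ℝ) 1 := by
  induction n with
  | zero => exact hx
  | succ n ih =>
    rw [Function.iterate_succ_apply']
    unfold fMinus at ih ⊢
    split_ifs with h
    · exact branch_zero_mem ha1 hp2 ih h
    · exact branch_one_mem ha1 hp1 ih (not_le.1 h).le

lemma fPlus_mem (ha1 : 1 < a) (hp1 : 1 - 1 / a ≤ p) (hp2 : p ≤ 1 / a) {x : ℝ}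
    (hx : x ∈ Icc (0 : ℝ) 1) (n : ℕ) : (fPlus a p)^[n] x ∈ Icc (0 : ℝ) 1 := by
  induction n with
  | zero => exact hx
  | succ n ih =>
    rw [Function.iterate_succ_apply']
    unfold fPlus at ih ⊢
    split_ifs with h
    · exact branch_zero_mem ha1 hp2 ih h.le
    · exact branch_one_mem ha1 hp1 ih (not_lt.1 h)

lemma isOrbit_itinMinus (ha1 : 1 < a) (hp1 : 1 - 1 / a ≤ p) (hp2 : p ≤ 1 / a) {x : ℝ}
    (hx : x ∈ Icc (0 : ℝ) 1) : IsOrbit a p x (itinMinus a p x) := by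
  refine ⟨fun n => (fMinus a p)^[n] x, rfl, fMinus_mem ha1 hp1 hp2 hx, fun n => ?_,
    fun n h => ?_, fun n h => ?_⟩
  · simp only [Function.iterate_succ_apply', itinMinus, decide_eq_true_eq]
    generalize (fMinus a p)^[n] x = y
    rcases le_or_gt y p with h | h
    · simp [fMinus, h, not_lt.2 h]
    · simp [fMinus, h, not_le.2 h]
  · exact (of_decide_eq_true h).le
  · exact not_lt.1 (of_decide_eq_false h)

lemma isOrbit_itinPlus (ha1 : 1 < a) (hp1 : 1 - 1 / a ≤ p) (hp2 : p ≤ 1 / a) {x : ℝ}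
    (hx : x ∈ Icc (0 : ℝ) 1) : IsOrbit a p x (itinPlus a p x) := by
  refine ⟨fun n => (fPlus a p)^[n] x, rfl, fPlus_mem ha1 hp1 hp2 hx, fun n => ?_,
    fun n h => ?_, fun n h => ?_⟩
  · simp only [Function.iterate_succ_apply', itinPlus, decide_eq_true_eq]
    generalize (fPlus a p)^[n] x = y
    rcases lt_or_ge y p with h | h
    · simp [fPlus, h, not_le.2 h]
    · simp [fPlus, h, not_lt.2 h]
  · exact of_decide_eq_true h
  · exact (not_le.1 (of_decide_eq_false h)).le

lemma itinMinus_mem_addrMinus (ha1 : 1 < a) (hp1 : 1 - 1 / a ≤ p) (hp2 : p ≤ 1 / a)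
    (hp : p ∈ Icc (0 : ℝ) 1) {x : ℝ} (hx : x ∈ Icc (0 : ℝ) 1) :
    itinMinus a p x ∈ addrMinus (itinMinus a p p) (itinPlus a p p) := by
  rintro n ⟨h1, h2⟩
  rw [shift_itinMinus] at h1 h2
  have hy := isOrbit_itinMinus ha1 hp1 hp2 (fMinus_mem ha1 hp1 hp2 hx n)
  generalize (fMinus a p)^[n] x = y at h1 h2 hy
  rcases lt_trichotomy y p with h | rfl | h
  · exact lexLt_asymm h1 (hy.lexLt_of_lt ha1 (isOrbit_itinMinus ha1 hp1 hp2 hp) h)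
  · exact lexLt_irrefl _ h1
  · exact lexLt_not_le ((isOrbit_itinPlus ha1 hp1 hp2 hp).lexLt_of_lt ha1 hy h) h2

lemma itinPlus_mem_addrPlus (ha1 : 1 < a) (hp1 : 1 - 1 / a ≤ p) (hp2 : p ≤ 1 / a)
    (hp : p ∈ Icc (0 : ℝ) 1) {x : ℝ} (hx : x ∈ Icc (0 : ℝ) 1) :
    itinPlus a p x ∈ addrPlus (itinMinus a p p) (itinPlus a p p) := by
  rintro n ⟨h1, h2⟩
  rw [shift_itinPlus] at h1 h2
  have hy := isOrbit_itinPlus ha1 hp1 hp2 (fPlus_mem ha1 hp1 hp2 hx n)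
  generalize (fPlus a p)^[n] x = y at h1 h2 hy
  rcases lt_trichotomy y p with h | rfl | h
  · exact lexLt_not_le (hy.lexLt_of_lt ha1 (isOrbit_itinMinus ha1 hp1 hp2 hp) h) h1
  · exact lexLt_irrefl _ h2
  · exact lexLt_asymm h2 ((isOrbit_itinPlus ha1 hp1 hp2 hp).lexLt_of_lt ha1 hy h)

/-- If `Γ` contains all itineraries of `f_{(a,p,-)}`, it has at least `a ^ n` prefixes of length
`n + 1`. -/
lemma pow_le_ncard_prefixes (ha1 : 1 < a) (hp1 : 1 - 1 / a ≤ p) (hp2 : p ≤ 1 / a)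
    {Γ : Set Omega} (hΓ : ∀ x ∈ Icc (0 : ℝ) 1, itinMinus a p x ∈ Γ) (n : ℕ) :
    a ^ n ≤ (((fun ω : Omega => fun i : Fin (n + 1) => ω i.val) '' Γ).ncard : ℝ) := by
  set R : Omega → (Fin (n + 1) → Bool) := fun ω i => ω i.val with hR
  obtain ⟨N, hN⟩ : ∃ N, N = ⌊a ^ n⌋₊ := ⟨_, rfl⟩
  have han : 1 ≤ a ^ n := one_le_pow₀ ha1.le
  have hNpos : 0 < N := by rw [hN]; exact Nat.floor_pos.2 han
  have hNle : (N : ℝ) ≤ a ^ n := by rw [hN]; exact Nat.floor_le (by positivity)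
  have hNlt : a ^ n < N + 1 := by rw [hN]; exact Nat.lt_floor_add_one _
  have hN0 : (0 : ℝ) < N := by exact_mod_cast hNpos
  have hpt : ∀ i : Fin (N + 1), (i : ℝ) / N ∈ Icc (0 : ℝ) 1 := fun i => by
    have : (i : ℝ) ≤ N := by exact_mod_cast Nat.lt_succ_iff.1 i.2
    exact ⟨by positivity, (div_le_one hN0).2 this⟩
  let F : Fin (N + 1) → (Fin (n + 1) → Bool) := fun i => R (itinMinus a p ((i : ℝ) / N))
  have hlt : ∀ i j : Fin (N + 1), i < j → F i ≠ F j := by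
    intro i j hij hF
    have hd : (i : ℝ) + 1 ≤ j := by exact_mod_cast hij
    have hxy : (i : ℝ) / N < (j : ℝ) / N :=
      div_lt_div_of_pos_right (by linarith) hN0
    obtain ⟨k, -, h1, h2, h3⟩ := (isOrbit_itinMinus ha1 hp1 hp2 (hpt i)).exists_first_diff ha1
      (isOrbit_itinMinus ha1 hp1 hp2 (hpt j)) hxy
    -- The spacing is at least `1 / N ≥ a ^ (-n)`, so the first difference occurs by index `n`.
    have hk : a ^ k ≤ a ^ n := by
      rw [← sub_div, ← mul_div_assoc, div_le_one hN0] at h3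
      have : a ^ k * 1 ≤ a ^ k * ((j : ℝ) - i) := by gcongr; linarith
      linarith
    have hkn : k ≤ n := (pow_le_pow_iff_right₀ ha1).1 hk
    have := congrFun hF ⟨k, by omega⟩
    simp only [F, hR, h1, h2] at this
    exact Bool.noConfusion this
  have hinj : Function.Injective F := by
    intro i j h
    rcases lt_trichotomy i j with hij | hij | hij
    · exact absurd h (hlt i j hij)
    · exact hij
    · exact absurd h.symm (hlt j i hij)
  have hsub : Set.range F ⊆ R '' Γ := by
    rintro _ ⟨i, rfl⟩
    exact ⟨_, hΓ _ (hpt i), rfl⟩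
  have hcard : N + 1 ≤ (R '' Γ).ncard := by
    have := Set.ncard_le_ncard hsub (Set.toFinite _)
    rwa [← Set.image_univ, Set.ncard_image_of_injective _ hinj, Set.ncard_univ,
      Nat.card_eq_fintype_card, Fintype.card_fin] at this
  have : ((N + 1 : ℕ) : ℝ) ≤ ((R '' Γ).ncard : ℝ) := by exact_mod_cast hcard
  push_cast at this
  linarith

end Overlapping

/-- There are at most `2 ^ (n + 1)` prefixes, so the sequence defining the growth rate is bounded
above and its real-valued `limsup` is meaningful. -/
lemma log_ncard_prefixes_div_le (Γ : Set Omega) (n : ℕ) :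
    Real.log ((fun ω : Omega => fun i : Fin (n + 1) => ω i.val) '' Γ).ncard / n
      ≤ 2 * Real.log 2 := by
  have hl2 : 0 < Real.log 2 := Real.log_pos (by norm_num)
  have hc : ((fun ω : Omega => fun i : Fin (n + 1) => ω i.val) '' Γ).ncard ≤ 2 ^ (n + 1) := by
    have := Set.ncard_le_ncard
      (Set.subset_univ ((fun ω : Omega => fun i : Fin (n + 1) => ω i.val) '' Γ)) (Set.toFinite _)
    simpa [Set.ncard_univ, Nat.card_eq_fintype_card] using this
  generalize ((fun ω : Omega => fun i : Fin (n + 1) => ω i.val) '' Γ).ncard = c at hc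
  rcases Nat.eq_zero_or_pos n with rfl | hn
  · simp only [Nat.cast_zero, div_zero]; positivity
  have hn' : (1 : ℝ) ≤ n := by exact_mod_cast hn
  rw [div_le_iff₀ (by linarith)]
  rcases Nat.eq_zero_or_pos c with rfl | hc0
  · simp only [Nat.cast_zero, Real.log_zero]; positivity
  have h1 : Real.log c ≤ Real.log ((2 : ℝ) ^ (n + 1)) :=
    Real.log_le_log (by exact_mod_cast hc0) (by exact_mod_cast hc)
  rw [Real.log_pow] at h1
  push_cast at h1
  nlinarith

/-- Critical itineraries of a pair of uniform overlapping functions form an admissible,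
non-null pair. -/
theorem stmt2 (a p : ℝ) (ha1 : 1 < a) (ha2 : a ≤ 2) (hp1 : 1 - 1 / a ≤ p) (hp2 : p ≤ 1 / a)
    (α β : Omega) (hα : α = itinMinus a p p) (hβ : β = itinPlus a p p) :
    admissible α β ∧ 0 < growthRate (addr α β) := by
  subst hα hβ
  have hinv : 1 / a < 1 := by rw [div_lt_one (by linarith)]; exact ha1
  have hp0 : 0 < p := by linarith
  have hpl : p < 1 := by linarith
  have hp : p ∈ Icc (0 : ℝ) 1 := ⟨hp0.le, hpl.le⟩
  refine ⟨⟨?_, ?_, ?_, ?_, itinMinus_mem_addrMinus ha1 hp1 hp2 hp hp,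
    itinPlus_mem_addrPlus ha1 hp1 hp2 hp hp⟩, ?_⟩
  · simp [itinMinus]
  · have : p < a * p := by nlinarith
    simpa [itinMinus, fMinus] using this
  · simp [itinPlus]
  · have : a * p + (1 - a) < p := by nlinarith
    simpa [itinPlus, fPlus] using this
  · refine lt_of_lt_of_le (Real.log_pos ha1) ?_
    unfold growthRate
    refine le_limsup_of_frequently_le (Eventually.frequently ?_)
      (isBoundedUnder_of ⟨2 * Real.log 2, log_ncard_prefixes_div_le _⟩)
    filter_upwards [eventually_ge_atTop 1] with n hn
    have hn' : (1 : ℝ) ≤ n := by exact_mod_cast hn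
    have hc := pow_le_ncard_prefixes (Γ := addr (itinMinus a p p) (itinPlus a p p)) ha1 hp1 hp2
      (fun x hx => Or.inl (itinMinus_mem_addrMinus ha1 hp1 hp2 hp hx)) n
    have h1 := Real.log_le_log (by positivity) hc
    rw [Real.log_pow] at h1
    rw [le_div_iff₀ (by linarith)]
    linarith
end

section
/- Let f_{(a,p,−)} and f_{(a,p,+)} be a pair of uniform overlapping functions with critical itineraries τ₋ and τ₊, and let Ω_{(a,p,±)} = τ_{(a,p,±)}([0,1]) be their address spaces. Then Ω_{(a,p,+)} = {ω ∈ Ω : S^nω ∉ [τ₋, τ₊) for all n ≥ 0} and Ω_{(a,p,−)} = {ω ∈ Ω : S^nω ∉ (τ₋, τ₊] for all n ≥ 0}, where the intervals are taken in the lexicographic order on Ω. -/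
/-!
Put `π = proj (1/a)`. It takes values in `[0,1]`, satisfies `π (S ω) = a π ω + ω₀ (1 - a)`, and inverts
both itinerary maps. Hence the itineraries `τ_{(a,p,+)}(x)` are exactly the strings `ω` with
`ω_n = 1 ↔ p ≤ π (S^n ω)` for all `n` (`mem_image_plus`), and the itineraries `τ_{(a,p,-)}(x)` those
with `ω_n = 1 ↔ p < π (S^n ω)` (`mem_image_minus`). Both kinds are *weakly compatible*:
`ω_n = 0` forces `π (S^n ω) ≤ p` and `ω_n = 1` forces `p ≤ π (S^n ω)`.

If two strings agree before index `k`, the difference of their projections is multiplied by `a ^ k`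
under `S^k` (`val_sub_agree`). Comparing at the first index of disagreement shows that among weakly
compatible strings a smaller projection forces a smaller string (`lexLt_of_val_lt`). This gives
the inclusion of the address spaces in the lexicographically defined sets.

For the converse, the lexicographic condition says that every shift `S^n ω` starting with `0` lies
below `τ₋` and every one starting with `1` lies above `τ₊`. If weak compatibility failed by `v > 0`
at some index, comparison with the critical itinerary at the first disagreement would give a later
index where it fails by at least `a * v`. Iterating contradicts the boundedness of `π`
(`weak_of_lex`). The same comparison then upgrades the relevant weak inequality to a strict one.
-/

open Filter Set

/-! ### The projection and compatible strings -/

/-- The projection with contraction ratio `1 / a`. -/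
noncomputable def val (a : ℝ) (ω : Omega) : ℝ := proj (1 / a) ω

/-- Weak compatibility with the critical point: no condition on the bit when the projected orbit
hits `p`. -/
def Weak (a p : ℝ) (ω : Omega) : Prop :=
  ∀ n, (ω n = false → val a (shift^[n] ω) ≤ p) ∧ (ω n = true → p ≤ val a (shift^[n] ω))

/-- The strings compatible with the partition `[0,p)`, `[p,1]`. -/
def CompatPlus (a p : ℝ) (ω : Omega) : Prop := ∀ n, ω n = true ↔ p ≤ val a (shift^[n] ω)

/-- The strings compatible with the partition `[0,p]`, `(p,1]`. -/
def CompatMinus (a p : ℝ) (ω : Omega) : Prop := ∀ n, ω n = true ↔ p < val a (shift^[n] ω)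

lemma shift_iterate_apply (ω : Omega) (n m : ℕ) : (shift^[n] ω) m = ω (m + n) := by
  induction n generalizing ω with
  | zero => rfl
  | succ n ih => rw [Function.iterate_succ_apply, ih]; simp [shift, Nat.add_assoc]

lemma CompatPlus.weak {a p : ℝ} {ω : Omega} (h : CompatPlus a p ω) : Weak a p ω := by
  refine fun n => ⟨fun h0 => ?_, fun h1 => (h n).1 h1⟩
  by_contra hc
  have := (h n).2 (not_le.1 hc).le
  simp [h0] at this

lemma CompatMinus.weak {a p : ℝ} {ω : Omega} (h : CompatMinus a p ω) : Weak a p ω := by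
  refine fun n => ⟨fun h0 => ?_, fun h1 => ((h n).1 h1).le⟩
  by_contra hc
  have := (h n).2 (not_le.1 hc)
  simp [h0] at this

lemma Weak.shift {a p : ℝ} {ω : Omega} (h : Weak a p ω) (n : ℕ) : Weak a p (shift^[n] ω) := by
  intro m
  rw [shift_iterate_apply, ← Function.iterate_add_apply]
  exact h (m + n)

lemma CompatPlus.shift {a p : ℝ} {ω : Omega} (h : CompatPlus a p ω) (n : ℕ) :
    CompatPlus a p (shift^[n] ω) := by
  intro m
  rw [shift_iterate_apply, ← Function.iterate_add_apply]
  exact h (m + n)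

lemma CompatMinus.shift {a p : ℝ} {ω : Omega} (h : CompatMinus a p ω) (n : ℕ) :
    CompatMinus a p (shift^[n] ω) := by
  intro m
  rw [shift_iterate_apply, ← Function.iterate_add_apply]
  exact h (m + n)

lemma b2r_mem (b : Bool) : 0 ≤ b2r b ∧ b2r b ≤ 1 := by
  cases b <;> simp [b2r]

lemma summable_b2r {x : ℝ} (h0 : 0 ≤ x) (h1 : x < 1) (ω : Omega) :
    Summable fun k : ℕ => b2r (ω k) * x ^ k := by
  refine Summable.of_nonneg_of_le (fun k => mul_nonneg (b2r_mem _).1 (pow_nonneg h0 k))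
    (fun k => ?_) (summable_geometric_of_lt_one h0 h1)
  exact mul_le_of_le_one_left (pow_nonneg h0 k) (b2r_mem _).2

lemma val_mem {a : ℝ} (ha : 1 < a) (ω : Omega) : 0 ≤ val a ω ∧ val a ω ≤ 1 := by
  have h0 : 0 ≤ 1 / a := by positivity
  have h1 : 1 / a < 1 := by rw [div_lt_one (by linarith)]; exact ha
  have hs := summable_b2r h0 h1 ω
  have hg := summable_geometric_of_lt_one h0 h1
  have hle : ∑' k : ℕ, b2r (ω k) * (1 / a) ^ k ≤ (1 - 1 / a)⁻¹ := by
    rw [← tsum_geometric_of_lt_one h0 h1]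
    exact hs.tsum_le_tsum
      (fun k => mul_le_of_le_one_left (pow_nonneg h0 k) (b2r_mem _).2) hg
  have hnn : 0 ≤ ∑' k : ℕ, b2r (ω k) * (1 / a) ^ k :=
    tsum_nonneg fun k => mul_nonneg (b2r_mem _).1 (pow_nonneg h0 k)
  have hpos : 0 < 1 - 1 / a := by linarith
  refine ⟨mul_nonneg hpos.le hnn, ?_⟩
  calc val a ω ≤ (1 - 1 / a) * (1 - 1 / a)⁻¹ := mul_le_mul_of_nonneg_left hle hpos.le
    _ = 1 := mul_inv_cancel₀ hpos.ne'

lemma val_shift {a : ℝ} (ha : 1 < a) (ω : Omega) :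
    val a (shift ω) = a * val a ω + b2r (ω 0) * (1 - a) := by
  have h0 : 0 ≤ 1 / a := by positivity
  have h1 : 1 / a < 1 := by rw [div_lt_one (by linarith)]; exact ha
  have ha0 : a ≠ 0 := by linarith
  have e := (summable_b2r h0 h1 ω).tsum_eq_zero_add
  have e2 : ∑' k : ℕ, b2r (ω (k + 1)) * (1 / a) ^ (k + 1)
      = (∑' k : ℕ, b2r (shift ω k) * (1 / a) ^ k) * (1 / a) := by
    rw [← tsum_mul_right]
    exact tsum_congr fun k => by rw [pow_succ, shift]; ring
  rw [e2] at e
  unfold val proj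
  rw [e]
  field_simp
  ring

lemma val_shift_iterate {a : ℝ} (ha : 1 < a) (ω : Omega) (n : ℕ) :
    val a (shift^[n + 1] ω) = a * val a (shift^[n] ω) + b2r (ω n) * (1 - a) := by
  rw [Function.iterate_succ_apply', val_shift ha, shift_iterate_apply, Nat.zero_add]

/-- The maps are expanding, so a bounded orbit driven by the bits of `ω` starts at the projection
of `ω`. -/
lemma val_unique {a : ℝ} (ha : 1 < a) (ω : Omega) (y : ℕ → ℝ) (hy : ∀ n, y n ∈ Icc (0 : ℝ) 1)
    (hs : ∀ n, y (n + 1) = a * y n + b2r (ω n) * (1 - a)) : val a ω = y 0 := by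
  have hd : ∀ n, val a (shift^[n] ω) - y n = a ^ n * (val a ω - y 0) := by
    intro n
    induction n with
    | zero => simp
    | succ n ih => rw [val_shift_iterate ha, hs, pow_succ]; linear_combination a * ih
  by_contra hne
  have hpos : 0 < |val a ω - y 0| := abs_pos.2 (sub_ne_zero.2 hne)
  obtain ⟨n, hn⟩ := pow_unbounded_of_one_lt (1 / |val a ω - y 0|) ha
  have h1 : |val a (shift^[n] ω) - y n| ≤ 1 := by
    have := val_mem ha (shift^[n] ω)
    have := hy n
    rw [abs_le]
    constructor <;> linarith [this.1, this.2]
  rw [hd, abs_mul, abs_of_pos (by positivity : 0 < a ^ n)] at h1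
  rw [div_lt_iff₀ hpos] at hn
  linarith

/-! ### Itineraries as compatible strings -/

lemma mapsTo_plus {a p : ℝ} (ha : 1 < a) (hp1 : 1 - 1 / a ≤ p) (hp2 : p ≤ 1 / a) {x : ℝ}
    (hx : x ∈ Icc (0 : ℝ) 1) (n : ℕ) : (fPlus a p)^[n] x ∈ Icc (0 : ℝ) 1 := by
  have h1 : a * p ≤ 1 := by rw [le_div_iff₀ (by linarith)] at hp2; linarith
  have h2 : a - 1 ≤ a * p := by
    have := mul_le_mul_of_nonneg_left hp1 (by linarith : 0 ≤ a)
    rwa [mul_sub, mul_one_div_cancel (by linarith), mul_one] at this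
  refine MapsTo.iterate (f := fPlus a p) (s := Icc 0 1) ?_ n hx
  rintro x ⟨hx0, hx1⟩
  unfold fPlus
  split_ifs with h
  · constructor <;> nlinarith
  · constructor <;> nlinarith

lemma mapsTo_minus {a p : ℝ} (ha : 1 < a) (hp1 : 1 - 1 / a ≤ p) (hp2 : p ≤ 1 / a) {x : ℝ}
    (hx : x ∈ Icc (0 : ℝ) 1) (n : ℕ) : (fMinus a p)^[n] x ∈ Icc (0 : ℝ) 1 := by
  have h1 : a * p ≤ 1 := by rw [le_div_iff₀ (by linarith)] at hp2; linarith
  have h2 : a - 1 ≤ a * p := by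
    have := mul_le_mul_of_nonneg_left hp1 (by linarith : 0 ≤ a)
    rwa [mul_sub, mul_one_div_cancel (by linarith), mul_one] at this
  refine MapsTo.iterate (f := fMinus a p) (s := Icc 0 1) ?_ n hx
  rintro x ⟨hx0, hx1⟩
  unfold fMinus
  split_ifs with h
  · constructor <;> nlinarith
  · constructor <;> nlinarith

lemma val_itinPlus {a p : ℝ} (ha : 1 < a) (hp1 : 1 - 1 / a ≤ p) (hp2 : p ≤ 1 / a) {x : ℝ}
    (hx : x ∈ Icc (0 : ℝ) 1) : val a (itinPlus a p x) = x := by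
  refine val_unique ha _ (fun n => (fPlus a p)^[n] x) (mapsTo_plus ha hp1 hp2 hx) fun n => ?_
  simp only [Function.iterate_succ_apply', itinPlus, b2r, decide_eq_true_eq]
  generalize (fPlus a p)^[n] x = z
  unfold fPlus
  by_cases h : z < p
  · simp [h, not_le.2 h]
  · simp [h, not_lt.1 h]

lemma val_itinMinus {a p : ℝ} (ha : 1 < a) (hp1 : 1 - 1 / a ≤ p) (hp2 : p ≤ 1 / a) {x : ℝ}
    (hx : x ∈ Icc (0 : ℝ) 1) : val a (itinMinus a p x) = x := by
  refine val_unique ha _ (fun n => (fMinus a p)^[n] x) (mapsTo_minus ha hp1 hp2 hx) fun n => ?_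
  simp only [Function.iterate_succ_apply', itinMinus, b2r, decide_eq_true_eq]
  generalize (fMinus a p)^[n] x = z
  unfold fMinus
  by_cases h : z ≤ p
  · simp [h, not_lt.2 h]
  · simp [h, not_le.1 h]

lemma compatPlus_itinPlus {a p : ℝ} (ha : 1 < a) (hp1 : 1 - 1 / a ≤ p) (hp2 : p ≤ 1 / a) {x : ℝ}
    (hx : x ∈ Icc (0 : ℝ) 1) : CompatPlus a p (itinPlus a p x) := by
  intro n
  rw [shift_itinPlus, val_itinPlus ha hp1 hp2 (mapsTo_plus ha hp1 hp2 hx n)]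
  simp [itinPlus]

lemma compatMinus_itinMinus {a p : ℝ} (ha : 1 < a) (hp1 : 1 - 1 / a ≤ p) (hp2 : p ≤ 1 / a)
    {x : ℝ} (hx : x ∈ Icc (0 : ℝ) 1) : CompatMinus a p (itinMinus a p x) := by
  intro n
  rw [shift_itinMinus, val_itinMinus ha hp1 hp2 (mapsTo_minus ha hp1 hp2 hx n)]
  simp [itinMinus]

lemma itinPlus_val {a p : ℝ} (ha : 1 < a) {ω : Omega} (h : CompatPlus a p ω) :
    itinPlus a p (val a ω) = ω := by
  have key : ∀ n, (fPlus a p)^[n] (val a ω) = val a (shift^[n] ω) := by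
    intro n
    induction n with
    | zero => rfl
    | succ n ih =>
      rw [Function.iterate_succ_apply', ih, val_shift_iterate ha]
      have hn := h n
      unfold fPlus b2r
      by_cases hlt : val a (shift^[n] ω) < p
      · simp [hlt, mt hn.1 (not_le.2 hlt)]
      · simp [hlt, hn.2 (not_lt.1 hlt)]
  funext n
  simp only [itinPlus, key]
  rw [Bool.eq_iff_iff, decide_eq_true_eq]
  exact (h n).symm

lemma itinMinus_val {a p : ℝ} (ha : 1 < a) {ω : Omega} (h : CompatMinus a p ω) :
    itinMinus a p (val a ω) = ω := by
  have key : ∀ n, (fMinus a p)^[n] (val a ω) = val a (shift^[n] ω) := by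
    intro n
    induction n with
    | zero => rfl
    | succ n ih =>
      rw [Function.iterate_succ_apply', ih, val_shift_iterate ha]
      have hn := h n
      unfold fMinus b2r
      by_cases hle : val a (shift^[n] ω) ≤ p
      · simp [hle, mt hn.1 (not_lt.2 hle)]
      · simp [hle, hn.2 (not_le.1 hle)]
  funext n
  simp only [itinMinus, key]
  rw [Bool.eq_iff_iff, decide_eq_true_eq]
  exact (h n).symm

lemma mem_image_plus {a p : ℝ} (ha : 1 < a) (hp1 : 1 - 1 / a ≤ p) (hp2 : p ≤ 1 / a) (ω : Omega) :
    ω ∈ (fun x => itinPlus a p x) '' Icc (0 : ℝ) 1 ↔ CompatPlus a p ω := by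
  constructor
  · rintro ⟨x, hx, rfl⟩
    exact compatPlus_itinPlus ha hp1 hp2 hx
  · exact fun h => ⟨val a ω, val_mem ha ω, itinPlus_val ha h⟩

lemma mem_image_minus {a p : ℝ} (ha : 1 < a) (hp1 : 1 - 1 / a ≤ p) (hp2 : p ≤ 1 / a) (ω : Omega) :
    ω ∈ (fun x => itinMinus a p x) '' Icc (0 : ℝ) 1 ↔ CompatMinus a p ω := by
  constructor
  · rintro ⟨x, hx, rfl⟩
    exact compatMinus_itinMinus ha hp1 hp2 hx
  · exact fun h => ⟨val a ω, val_mem ha ω, itinMinus_val ha h⟩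

lemma lexLt_trichotomy (σ ω : Omega) : lexLt σ ω ∨ σ = ω ∨ lexLt ω σ := by
  classical
  by_cases h : σ = ω
  · exact Or.inr (Or.inl h)
  have hex : ∃ k, σ k ≠ ω k := Function.ne_iff.1 h
  have hk := Nat.find_spec hex
  have hmin : ∀ i < Nat.find hex, σ i = ω i := fun i hi => not_not.1 (Nat.find_min hex hi)
  cases hσ : σ (Nat.find hex) <;> cases hω : ω (Nat.find hex)
  · simp [hσ, hω] at hk
  · exact Or.inl ⟨_, hmin, hσ, hω⟩
  · exact Or.inr (Or.inr ⟨_, fun i hi => (hmin i hi).symm, hω, hσ⟩)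
  · simp [hσ, hω] at hk

lemma val_sub_agree {a : ℝ} (ha : 1 < a) {σ ω : Omega} {k : ℕ} (h : ∀ i < k, σ i = ω i) :
    val a (shift^[k] σ) - val a (shift^[k] ω) = a ^ k * (val a σ - val a ω) := by
  induction k with
  | zero => simp
  | succ k ih =>
    have ih' := ih fun i hi => h i (hi.trans k.lt_succ_self)
    rw [val_shift_iterate ha, val_shift_iterate ha, h k k.lt_succ_self, pow_succ]
    linear_combination a * ih'

lemma lexLt_of_val_lt {a p : ℝ} (ha : 1 < a) {σ ω : Omega} (hσ : Weak a p σ) (hω : Weak a p ω)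
    (h : val a σ < val a ω) : lexLt σ ω := by
  rcases lexLt_trichotomy σ ω with hlt | rfl | ⟨k, hk, hk0, hk1⟩
  · exact hlt
  · exact absurd h (lt_irrefl _)
  · have e := val_sub_agree ha hk
    have h1 := (hω k).1 hk0
    have h2 := (hσ k).2 hk1
    have h3 : 0 < a ^ k * (val a ω - val a σ) := mul_pos (by positivity) (by linarith)
    linarith

lemma val_lt_of_lexLt_minus {a p : ℝ} (ha : 1 < a) {σ ω : Omega} (hσ : Weak a p σ)
    (hω : CompatMinus a p ω) (h : lexLt σ ω) : val a σ < val a ω := by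
  obtain ⟨k, hk, hk0, hk1⟩ := h
  have e := val_sub_agree ha hk
  have h1 := (hσ k).1 hk0
  have h2 := (hω k).1 hk1
  have h3 : a ^ k * (val a σ - val a ω) < 0 := by linarith
  linarith [neg_of_mul_neg_right h3 (by positivity)]

lemma val_lt_of_plus_lexLt {a p : ℝ} (ha : 1 < a) {σ ω : Omega} (hσ : CompatPlus a p σ)
    (hω : Weak a p ω) (h : lexLt σ ω) : val a σ < val a ω := by
  obtain ⟨k, hk, hk0, hk1⟩ := h
  have e := val_sub_agree ha hk
  have h1 : val a (shift^[k] σ) < p := by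
    by_contra hc
    have := (hσ k).2 (not_lt.1 hc)
    simp [hk0] at this
  have h2 := (hω k).2 hk1
  have h3 : a ^ k * (val a σ - val a ω) < 0 := by linarith
  linarith [neg_of_mul_neg_right h3 (by positivity)]

/-- The signed amount by which the weak compatibility condition fails at index `n`. -/
noncomputable def defect (a p : ℝ) (ω : Omega) (n : ℕ) : ℝ :=
  if ω n then p - val a (shift^[n] ω) else val a (shift^[n] ω) - p

/-- A positive defect would be multiplied by at least `a` at a later index, again and again. -/
lemma weak_of_lex {a p : ℝ} (ha : 1 < a) {α β ω : Omega} (hα : Weak a p α) (hβ : Weak a p β)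
    (hα0 : α 0 = false) (hβ0 : β 0 = true) (hαp : val a α = p) (hβp : val a β = p)
    (h0 : ∀ n, ω n = false → lexLe (shift^[n] ω) α)
    (h1 : ∀ n, ω n = true → lexLe β (shift^[n] ω)) : Weak a p ω := by
  have step : ∀ n, 0 < defect a p ω n → ∃ m, a * defect a p ω n ≤ defect a p ω m := by
    intro n hn
    -- The first disagreement has index `k ≥ 1`, since the initial bits agree; so `a ≤ a ^ k`.
    have hpow : ∀ k : ℕ, k ≠ 0 → a * defect a p ω n ≤ a ^ k * defect a p ω n := fun k hk =>
      mul_le_mul_of_nonneg_right (le_self_pow₀ ha.le hk) hn.le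
    cases hb : ω n
    · have hd : defect a p ω n = val a (shift^[n] ω) - p := by simp [defect, hb]
      rcases h0 n hb with heq | ⟨k, hk, hk0, hk1⟩
      · rw [hd, heq, hαp, sub_self] at hn
        exact absurd hn (lt_irrefl _)
      · have hk' : k ≠ 0 := by
          rintro rfl
          simp [hα0] at hk1
        have e := val_sub_agree ha hk
        rw [hαp, ← hd, ← Function.iterate_add_apply] at e
        rw [shift_iterate_apply] at hk0
        refine ⟨k + n, (hpow k hk').trans ?_⟩
        have hd' : defect a p ω (k + n) = val a (shift^[k + n] ω) - p := by simp [defect, hk0]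
        rw [hd', ← e]
        linarith [(hα k).2 hk1]
    · have hd : defect a p ω n = p - val a (shift^[n] ω) := by simp [defect, hb]
      rcases h1 n hb with heq | ⟨k, hk, hk0, hk1⟩
      · rw [hd, ← heq, hβp, sub_self] at hn
        exact absurd hn (lt_irrefl _)
      · have hk' : k ≠ 0 := by
          rintro rfl
          simp [hβ0] at hk0
        have e := val_sub_agree ha hk
        rw [hβp, ← hd, ← Function.iterate_add_apply] at e
        rw [shift_iterate_apply] at hk1
        refine ⟨k + n, (hpow k hk').trans ?_⟩
        have hd' : defect a p ω (k + n) = p - val a (shift^[k + n] ω) := by simp [defect, hk1]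
        rw [hd', ← e]
        linarith [(hβ k).1 hk0]
  have hbd : ∀ n, defect a p ω n ≤ 1 := by
    intro n
    have hv := val_mem ha (shift^[n] ω)
    have hp := val_mem ha α
    rw [hαp] at hp
    unfold defect
    split_ifs <;> linarith [hv.1, hv.2, hp.1, hp.2]
  have hall : ∀ n, defect a p ω n ≤ 0 := by
    intro n
    by_contra hn
    rw [not_le] at hn
    have hgrow : ∀ j : ℕ, ∃ m, a ^ j * defect a p ω n ≤ defect a p ω m := by
      intro j
      induction j with
      | zero => exact ⟨n, by simp⟩
      | succ j ih =>
        obtain ⟨m, hm⟩ := ih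
        obtain ⟨m', hm'⟩ := step m (lt_of_lt_of_le (mul_pos (by positivity) hn) hm)
        refine ⟨m', le_trans ?_ hm'⟩
        rw [pow_succ', mul_assoc]
        exact mul_le_mul_of_nonneg_left hm (by linarith)
    obtain ⟨j, hj⟩ := pow_unbounded_of_one_lt (1 / defect a p ω n) ha
    obtain ⟨m, hm⟩ := hgrow j
    rw [div_lt_iff₀ hn] at hj
    linarith [hbd m]
  intro n
  have := hall n
  constructor <;> intro hb <;> simp only [defect, hb, if_true, Bool.false_eq_true, if_false] at this
    <;> linarith

/-- The address spaces Ω_{(a,p,±)} = τ_{(a,p,±)}([0,1]) are characterized by the critical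
itineraries τ₋ = τ_{(a,p,-)}(p), τ₊ = τ_{(a,p,+)}(p):
Ω_{(a,p,+)} = {ω : S^n ω ∉ [τ₋,τ₊) ∀ n} and Ω_{(a,p,-)} = {ω : S^n ω ∉ (τ₋,τ₊] ∀ n}. -/
theorem stmt3 (a p : ℝ) (ha1 : 1 < a) (ha2 : a ≤ 2) (hp1 : 1 - 1 / a ≤ p) (hp2 : p ≤ 1 / a) :
    (fun x => itinPlus a p x) '' Set.Icc (0 : ℝ) 1
      = addrPlus (itinMinus a p p) (itinPlus a p p) ∧
    (fun x => itinMinus a p x) '' Set.Icc (0 : ℝ) 1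
      = addrMinus (itinMinus a p p) (itinPlus a p p) := by
  have hpI : p ∈ Icc (0 : ℝ) 1 := by
    have h1 : 1 / a < 1 := by rw [div_lt_one (by linarith)]; exact ha1
    constructor <;> linarith
  have hαC := compatMinus_itinMinus ha1 hp1 hp2 hpI
  have hβC := compatPlus_itinPlus ha1 hp1 hp2 hpI
  have hαp := val_itinMinus ha1 hp1 hp2 hpI
  have hβp := val_itinPlus ha1 hp1 hp2 hpI
  have hα0 : itinMinus a p p 0 = false := by simp [itinMinus]
  have hβ0 : itinPlus a p p 0 = true := by simp [itinPlus]
  generalize itinMinus a p p = α at *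
  generalize itinPlus a p p = β at *
  have hαrec : itinMinus a p p = α := by simpa only [hαp] using itinMinus_val ha1 hαC
  have hβrec : itinPlus a p p = β := by simpa only [hβp] using itinPlus_val ha1 hβC
  -- The initial bit decides the comparison with the critical itinerary on the other side of `p`.
  have hltβ : ∀ (ω : Omega) (n : ℕ), ω n = false → lexLt (shift^[n] ω) β := fun ω n h =>
    ⟨0, by simp, by rw [shift_iterate_apply, Nat.zero_add]; exact h, hβ0⟩
  have hltα : ∀ (ω : Omega) (n : ℕ), ω n = true → lexLt α (shift^[n] ω) := fun ω n h =>
    ⟨0, by simp, hα0, by rw [shift_iterate_apply, Nat.zero_add]; exact h⟩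
  constructor
  · ext ω
    rw [mem_image_plus ha1 hp1 hp2]
    constructor
    · rintro h n ⟨hle, hlt⟩
      have hn := h.shift n
      rcases lt_trichotomy (val a (shift^[n] ω)) p with hv | hv | hv
      · have hl := lexLt_of_val_lt ha1 hn.weak hαC.weak (hαp.symm ▸ hv)
        rcases hle with heq | hgt
        · exact lexLt_irrefl _ (heq ▸ hl)
        · exact lexLt_asymm hl hgt
      · have e := itinPlus_val ha1 hn
        rw [hv, hβrec] at e
        exact lexLt_irrefl _ (e ▸ hlt)
      · exact lexLt_asymm hlt (lexLt_of_val_lt ha1 hβC.weak hn.weak (hβp.symm ▸ hv))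
    · intro h
      have h0 : ∀ n, ω n = false → lexLt (shift^[n] ω) α := by
        intro n hb
        rcases lexLt_trichotomy (shift^[n] ω) α with hl | he | hl
        · exact hl
        · exact absurd ⟨Or.inl he.symm, hltβ ω n hb⟩ (h n)
        · exact absurd ⟨Or.inr hl, hltβ ω n hb⟩ (h n)
      have h1 : ∀ n, ω n = true → lexLe β (shift^[n] ω) := by
        intro n hb
        rcases lexLt_trichotomy (shift^[n] ω) β with hl | he | hl
        · exact absurd ⟨Or.inr (hltα ω n hb), hl⟩ (h n)
        · exact Or.inl he.symm
        · exact Or.inr hl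
      have hW := weak_of_lex ha1 hαC.weak hβC.weak hα0 hβ0 hαp hβp (fun n hb => Or.inr (h0 n hb)) h1
      refine fun n => ⟨(hW n).2, fun hv => ?_⟩
      by_contra hb
      have := val_lt_of_lexLt_minus ha1 (hW.shift n) hαC (h0 n (Bool.eq_false_of_not_eq_true hb))
      linarith
  · ext ω
    rw [mem_image_minus ha1 hp1 hp2]
    constructor
    · rintro h n ⟨hlt, hle⟩
      have hn := h.shift n
      rcases lt_trichotomy (val a (shift^[n] ω)) p with hv | hv | hv
      · exact lexLt_asymm hlt (lexLt_of_val_lt ha1 hn.weak hαC.weak (hαp.symm ▸ hv))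
      · have e := itinMinus_val ha1 hn
        rw [hv, hαrec] at e
        exact lexLt_irrefl _ (e ▸ hlt)
      · have hl := lexLt_of_val_lt ha1 hβC.weak hn.weak (hβp.symm ▸ hv)
        rcases hle with heq | hgt
        · exact lexLt_irrefl _ (heq ▸ hl)
        · exact lexLt_asymm hl hgt
    · intro h
      have h0 : ∀ n, ω n = false → lexLe (shift^[n] ω) α := by
        intro n hb
        rcases lexLt_trichotomy (shift^[n] ω) α with hl | he | hl
        · exact Or.inr hl
        · exact Or.inl he
        · exact absurd ⟨hl, Or.inr (hltβ ω n hb)⟩ (h n)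
      have h1 : ∀ n, ω n = true → lexLt β (shift^[n] ω) := by
        intro n hb
        rcases lexLt_trichotomy (shift^[n] ω) β with hl | he | hl
        · exact absurd ⟨hltα ω n hb, Or.inr hl⟩ (h n)
        · exact absurd ⟨hltα ω n hb, Or.inl he⟩ (h n)
        · exact hl
      have hW := weak_of_lex ha1 hαC.weak hβC.weak hα0 hβ0 hαp hβp h0 (fun n hb => Or.inr (h1 n hb))
      refine fun n => ⟨fun hb => ?_, fun hv => ?_⟩
      · have := val_lt_of_plus_lexLt ha1 hβC (hW.shift n) (h1 n hb)
        linarith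
      · by_contra hb
        have := (hW n).1 (Bool.eq_false_of_not_eq_true hb)
        linarith
end

section
/- There exist real numbers a and p with 1 < a ≤ 2 and 1 − 1/a ≤ p ≤ 1/a such that for every natural number n ≥ 2, n is prime if and only if f_{(a,p,−)}^{(n−1)}(p) > p, where f^{(n−1)} denotes the (n−1)-st iterate. -/
/-!
Take `p = 1 - 1/a`, the left end of the parameter range, and put `x = 1/a`. Write `c k = 1` if
`k + 1` is prime and `c k = 0` otherwise, and let `S n = ∑ k, c (n + k) x ^ k`, so that
`S n = c n + x * S (n + 1)`. If `(1 - x) * S n > p` is equivalent to `c n = 1` for all `n`, then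
this recursion says that `f` maps `(1 - x) * S n` to `(1 - x) * S (n + 1)`, and so
`f^n(p) = (1 - x) * S n` as soon as `S 0 = 1`.

* `S 0 = 1` has a solution `x ∈ [1/2, 3/5]` by the intermediate value theorem
  (`exists_primeTail_eq_one`).
* If `c n = 1` then `S n > 1`, because there are infinitely many primes
  (`one_lt_primeTail`).
* If `c n = 0` then `S n ≤ 1` (`primeTail_le_one`). For `n = 0` this is an equality. For `n ≥ 3`
  the only exponents that occur have the same parity, since primes above `2` are odd, so
  `S n ≤ x / (1 - x²) ≤ 1`; the last inequality holds as `x + x² ≤ 1` on `[1/2, 3/5]`.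
-/


open Filter Set

/-- The primality sequence as a string of bits, offset by one so that the bit at `k` is the one of
the integer `k + 1`: this matches the iterate `n - 1` that tests `n`. -/
noncomputable def primeBit (k : ℕ) : ℝ := if (k + 1).Prime then 1 else 0

/-- The tail series `∑ k, primeBit (n + k) * x ^ k` of the primality sequence. -/
noncomputable def primeTail (x : ℝ) (n : ℕ) : ℝ := ∑' k : ℕ, primeBit (n + k) * x ^ k

lemma primeBit_nonneg (k : ℕ) : 0 ≤ primeBit k := by
  unfold primeBit; split_ifs <;> norm_num

lemma primeBit_le_one (k : ℕ) : primeBit k ≤ 1 := by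
  unfold primeBit; split_ifs <;> norm_num

lemma primeBit_of_odd {k : ℕ} (hk : Odd k) (h3 : 3 ≤ k) : primeBit k = 0 := by
  unfold primeBit
  rw [if_neg]
  intro hp
  have := hp.eq_one_or_self_of_dvd 2 (even_iff_two_dvd.mp hk.add_one)
  omega

lemma summable_primeTail {x : ℝ} (h0 : 0 ≤ x) (h1 : x < 1) (n : ℕ) :
    Summable fun k : ℕ => primeBit (n + k) * x ^ k :=
  Summable.of_nonneg_of_le (fun k => mul_nonneg (primeBit_nonneg _) (pow_nonneg h0 k))
    (fun k => mul_le_of_le_one_left (pow_nonneg h0 k) (primeBit_le_one _))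
    (summable_geometric_of_lt_one h0 h1)

lemma primeTail_nonneg {x : ℝ} (h0 : 0 ≤ x) (n : ℕ) : 0 ≤ primeTail x n :=
  tsum_nonneg fun k => mul_nonneg (primeBit_nonneg _) (pow_nonneg h0 k)

lemma primeTail_succ {x : ℝ} (h0 : 0 ≤ x) (h1 : x < 1) (n : ℕ) :
    primeTail x n = primeBit n + x * primeTail x (n + 1) := by
  unfold primeTail
  rw [(summable_primeTail h0 h1 n).tsum_eq_zero_add, ← tsum_mul_left]
  simp only [add_zero, pow_zero, mul_one]
  congr 1
  refine tsum_congr fun k => ?_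
  rw [show n + 1 + k = n + (k + 1) by ring]
  ring

lemma primeTail_pos {x : ℝ} (h0 : 0 < x) (h1 : x < 1) (n : ℕ) : 0 < primeTail x n := by
  obtain ⟨q, hq, hqp⟩ := Nat.exists_infinite_primes (n + 1)
  refine (summable_primeTail h0.le h1 n).tsum_pos
    (fun k => mul_nonneg (primeBit_nonneg _) (pow_nonneg h0.le k)) (q - (n + 1)) ?_
  have : primeBit (n + (q - (n + 1))) = 1 := by
    unfold primeBit
    rw [if_pos]
    rwa [show n + (q - (n + 1)) + 1 = q by omega]
  rw [this, one_mul]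
  exact pow_pos h0 _

lemma one_lt_primeTail {x : ℝ} (h0 : 0 < x) (h1 : x < 1) {n : ℕ} (hn : (n + 1).Prime) :
    1 < primeTail x n := by
  rw [primeTail_succ h0.le h1, primeBit, if_pos hn]
  have := mul_pos h0 (primeTail_pos h0 h1 (n + 1))
  linarith

/-- At an even position from `2` on, only even powers of `x` occur, since primes above `2` are
odd; hence the tail is dominated by `∑ x ^ (2 * j)`. -/
lemma primeTail_le_of_even {x : ℝ} (h0 : 0 ≤ x) (h1 : x < 1) {n : ℕ} (hn : Even n) (h2 : 2 ≤ n) :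
    primeTail x n ≤ (1 - x ^ 2)⁻¹ := by
  have he : HasSum (fun k : ℕ => if Even (2 * k) then x ^ (2 * k) else 0) (1 - x ^ 2)⁻¹ := by
    simpa [pow_mul] using hasSum_geometric_of_lt_one (sq_nonneg x) (by nlinarith : x ^ 2 < 1)
  have ho : HasSum (fun k : ℕ => if Even (2 * k + 1) then x ^ (2 * k + 1) else 0) 0 := by
    simp
  have hs := HasSum.even_add_odd (f := fun k : ℕ => if Even k then x ^ k else 0) he ho
  rw [add_zero] at hs
  refine hasSum_le (fun k => ?_) (summable_primeTail h0 h1 n).hasSum hs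
  split_ifs with hk
  · exact mul_le_of_le_one_left (pow_nonneg h0 k) (primeBit_le_one _)
  · have hk' := Nat.not_even_iff_odd.mp hk
    have : 1 ≤ k := hk'.pos
    rw [primeBit_of_odd (hn.add_odd hk') (by omega), zero_mul]

/-- Away from the initial position, a non-prime position has tail at most `1`. -/
lemma primeTail_le_one {x : ℝ} (h0 : 0 ≤ x) (h1 : x ≤ 3 / 5) {n : ℕ} (hn : n ≠ 0)
    (hp : ¬ (n + 1).Prime) : primeTail x n ≤ 1 := by
  have hx1 : x < 1 := by linarith
  have h3 : 3 ≤ n := by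
    by_contra! h
    interval_cases n <;> revert hp <;> norm_num at *
  have hM : x * (1 - x ^ 2)⁻¹ ≤ 1 := by
    rw [← div_eq_mul_inv, div_le_one (by nlinarith)]
    nlinarith
  rw [primeTail_succ h0 hx1, primeBit, if_neg hp, zero_add]
  rcases Nat.even_or_odd n with he | ho
  · rw [primeTail_succ h0 hx1, primeBit_of_odd he.add_one (by omega), zero_add]
    have hb := primeTail_le_of_even h0 hx1 (n := n + 1 + 1) (by simpa [parity_simps] using he)
      (by omega)
    nlinarith [mul_le_mul_of_nonneg_left hb h0]
  · have hb := primeTail_le_of_even h0 hx1 (n := n + 1) ho.add_one (by omega)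
    exact (mul_le_mul_of_nonneg_left hb h0).trans hM

lemma primeTail_zero_eq {x : ℝ} (h0 : 0 ≤ x) (h1 : x < 1) :
    primeTail x 0 = x + x ^ 2 + x ^ 4 * primeTail x 4 := by
  have b0 : primeBit 0 = 0 := by unfold primeBit; norm_num
  have b1 : primeBit 1 = 1 := by unfold primeBit; norm_num
  have b2 : primeBit 2 = 1 := by unfold primeBit; norm_num
  have b3 : primeBit 3 = 0 := by unfold primeBit; norm_num
  rw [primeTail_succ h0 h1 0, primeTail_succ h0 h1 1, primeTail_succ h0 h1 2,
    primeTail_succ h0 h1 3, b0, b1, b2, b3]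
  ring

lemma exists_primeTail_eq_one : ∃ x : ℝ, 1 / 2 ≤ x ∧ x ≤ 3 / 5 ∧ primeTail x 0 = 1 := by
  have hcont : ContinuousOn (fun x => primeTail x 0) (Icc (1 / 2 : ℝ) (3 / 5)) := by
    refine continuousOn_tsum (u := fun k : ℕ => (3 / 5 : ℝ) ^ k) (fun k => by fun_prop)
      (summable_geometric_of_lt_one (by norm_num) (by norm_num)) fun k x hx => ?_
    have hx0 : 0 ≤ x := by linarith [hx.1]
    rw [Real.norm_of_nonneg (mul_nonneg (primeBit_nonneg _) (pow_nonneg hx0 k))]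
    exact (mul_le_of_le_one_left (pow_nonneg hx0 k) (primeBit_le_one _)).trans
      (pow_le_pow_left₀ hx0 hx.2 k)
  have hlo : primeTail (1 / 2) 0 ≤ 1 := by
    rw [primeTail_zero_eq (by norm_num) (by norm_num)]
    have := primeTail_le_of_even (x := 1 / 2) (by norm_num) (by norm_num) (n := 4)
      (by decide) (by norm_num)
    norm_num at this ⊢
    linarith
  have hhi : 1 ≤ primeTail (3 / 5) 0 := by
    have h5 : (5 : ℕ).Prime := by norm_num
    have h4 : 1 < primeTail (3 / 5) 4 := one_lt_primeTail (by norm_num) (by norm_num) h5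
    rw [primeTail_zero_eq (by norm_num) (by norm_num)]
    norm_num at h4 ⊢
    linarith
  obtain ⟨x, hx, hx1⟩ := intermediate_value_Icc (by norm_num : (1 / 2 : ℝ) ≤ 3 / 5) hcont ⟨hlo, hhi⟩
  exact ⟨x, hx.1, hx.2, hx1⟩

/-- Primality tester: there are parameters a, p of a uniform overlapping function such that
n ≥ 2 is prime iff the (n-1)-st iterate of p under f_{(a,p,-)} lies strictly above p. -/
theorem stmt6 :
    ∃ a p : ℝ, 1 < a ∧ a ≤ 2 ∧ 1 - 1 / a ≤ p ∧ p ≤ 1 / a ∧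
      ∀ n : ℕ, 2 ≤ n → (Nat.Prime n ↔ p < (fMinus a p)^[n - 1] p) := by
  obtain ⟨x, hx2, hx3, hS⟩ := exists_primeTail_eq_one
  have h0 : 0 < x := by linarith
  have h1 : x < 1 := by linarith
  have key : ∀ n, (n + 1).Prime ↔ 1 - x < (1 - x) * primeTail x n := by
    intro n
    rw [lt_mul_iff_one_lt_right (by linarith)]
    refine ⟨one_lt_primeTail h0 h1, fun h => ?_⟩
    by_contra hp
    rcases eq_or_ne n 0 with rfl | hn
    · exact h.ne' hS
    · exact h.not_ge (primeTail_le_one h0.le hx3 hn hp)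
  have orbit : ∀ n, (fMinus x⁻¹ (1 - x))^[n] (1 - x) = (1 - x) * primeTail x n := by
    intro n
    induction n with
    | zero => simp [hS]
    | succ n ih =>
      rw [Function.iterate_succ_apply', ih, fMinus]
      have hs := primeTail_succ h0.le h1 n
      by_cases hp : (n + 1).Prime
      · rw [if_neg ((key n).mp hp).not_ge, hs, primeBit, if_pos hp]
        field_simp
        ring
      · rw [if_pos (not_lt.mp (mt (key n).mpr hp)), hs, primeBit, if_neg hp]
        field_simp
        ring
  refine ⟨x⁻¹, 1 - x, (one_lt_inv₀ h0).mpr h1, ?_, by simp, ?_, fun n hn => ?_⟩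
  · rw [inv_le_comm₀ h0 (by norm_num)]
    linarith
  · rw [one_div, inv_inv]
    linarith
  · rw [orbit, ← key, Nat.sub_add_cancel (by omega)]
end

section
/- If (α, β) is an admissible pair with α₂ = 1 and β₂ = 0, i.e., α = 011α' and β = 100β', and moreover α₃ = 1 or β₃ = 0 (that is, α' begins with 1 or β' begins with 0), then (α, β) is non-null: h(Ω_{(α,β)}) > 0. -/
/-!
The address space contains a free concatenation of two words of equal length, so the number of
its prefixes grows exponentially.

If `α = 0111…` and `β = 100…`, a string without the factors `00` and `111` lies in the address
space: a shift of it that begins with `0` is below `α`, because it does not begin with `0111`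
(`not_lexLt_of_ones`), and one that begins with `1` is above `β`, because it does not begin with
`100` (`not_lexLe_of_zeros`). All concatenations of `01011` and `01101` avoid both factors. If
instead `α = 011…` and `β = 1000…`, the bitwise complements of these strings work, by the symmetry
exchanging `0` and `1`. In both cases there are at least `2 ^ m` prefixes of length `5 * m + 1`
(`two_pow_le_ncard`), so the growth rate is at least `log 2 / 5`.
-/


open Filter Set

/-- The concatenation of the words `01011` (where `c` is `false`) and `01101` (where `c` is
`true`), in the order prescribed by `c`. -/
def blockString (c : ℕ → Bool) : Omega := fun n =>
  if n % 5 = 0 then false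
  else if n % 5 = 2 then c (n / 5)
  else if n % 5 = 3 then !c (n / 5)
  else true

lemma blockString_no_two_false (c : ℕ → Bool) (n : ℕ) :
    blockString c n = true ∨ blockString c (n + 1) = true := by
  have h : n % 5 < 5 := Nat.mod_lt _ (by norm_num)
  have hn : n = 5 * (n / 5) + n % 5 := (Nat.div_add_mod n 5).symm
  generalize n / 5 = q at hn
  generalize n % 5 = r at hn h
  subst hn
  interval_cases r <;>
    simp [blockString, Nat.add_assoc, Nat.mul_add_div]

lemma blockString_no_three_true (c : ℕ → Bool) (n : ℕ) :
    blockString c n = false ∨ blockString c (n + 1) = false ∨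
      blockString c (n + 2) = false := by
  have h : n % 5 < 5 := Nat.mod_lt _ (by norm_num)
  have hn : n = 5 * (n / 5) + n % 5 := (Nat.div_add_mod n 5).symm
  generalize n / 5 = q at hn
  generalize n % 5 = r at hn h
  subst hn
  interval_cases r <;>
    simp [blockString, Nat.add_assoc, Nat.mul_add_div]

/-- The bits of `c` can be read off from the third letters of the blocks. -/
lemma blockString_read (c : ℕ → Bool) (i : ℕ) : blockString c (5 * i + 2) = c i := by
  simp [blockString, Nat.mul_add_div]

lemma iterate_shift_apply (n : ℕ) (ω : Omega) (k : ℕ) : (shift^[n] ω) k = ω (n + k) := by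
  induction n generalizing ω with
  | zero => simp
  | succ n ih => rw [Function.iterate_succ_apply, ih, shift]; congr 1; omega

/-- If `σ` is lexicographically below `ω`, one of the first `m` letters is `0` in `σ` and `1` in
`ω`, or these letters agree. -/
lemma lexLt_first_letters {σ ω : Omega} (h : lexLt σ ω) (m : ℕ) :
    (∃ k < m, σ k = false ∧ ω k = true) ∨ ∀ i < m, σ i = ω i := by
  obtain ⟨k, hk, h1, h2⟩ := h
  rcases lt_or_ge k m with hkm | hkm
  · exact Or.inl ⟨k, hkm, h1, h2⟩
  · exact Or.inr fun i hi => hk i (hi.trans_le hkm)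

/-- A string that begins with `0` but whose first `m` letters are not `011…1` is not above a
string whose letters in positions `1, …, m - 1` are all `1`. -/
lemma not_lexLt_of_ones {α σ : Omega} (m : ℕ) (hα : ∀ i < m, 0 < i → α i = true)
    (h0 : σ 0 = false) (hσ : ∃ i < m, 0 < i ∧ σ i = false) : ¬ lexLt α σ := by
  intro h
  rcases lexLt_first_letters h m with ⟨k, hkm, h1, h2⟩ | h
  · rcases Nat.eq_zero_or_pos k with rfl | hk
    · simp_all
    · simp_all
  · obtain ⟨i, him, hi, hf⟩ := hσ
    have := h i him
    simp_all

/-- A string that begins with `1` but whose first `m` letters are not `100…0` is strictly above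
every string whose letters in positions `1, …, m - 1` are all `0`. -/
lemma not_lexLe_of_zeros {β σ : Omega} (m : ℕ) (hβ : ∀ i < m, 0 < i → β i = false)
    (h0 : σ 0 = true) (hσ : ∃ i < m, 0 < i ∧ σ i = true) : ¬ lexLe σ β := by
  intro h
  obtain ⟨i, him, hi, hf⟩ := hσ
  rcases h with rfl | h
  · simp_all
  rcases lexLt_first_letters h m with ⟨k, hkm, h1, h2⟩ | h
  · rcases Nat.eq_zero_or_pos k with rfl | hk
    · simp_all
    · simp_all
  · have := h i him
    simp_all

/-- Every prefix set has at most `2 ^ (n + 1)` elements, so the sequence defining the growth rate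
is bounded above and its real-valued `limsup` is meaningful. -/
lemma isBoundedUnder_growth (Γ : Set Omega) :
    IsBoundedUnder (· ≤ ·) atTop (fun n : ℕ =>
      Real.log ((fun ω : Omega => fun i : Fin (n + 1) => ω i.val) '' Γ).ncard / n) := by
  refine isBoundedUnder_of ⟨2 * Real.log 2, fun n => ?_⟩
  have hl : 0 < Real.log 2 := Real.log_pos (by norm_num)
  rcases Nat.eq_zero_or_pos n with rfl | hn
  · simpa using hl.le
  have hn1 : (1 : ℝ) ≤ n := by exact_mod_cast hn
  rw [div_le_iff₀ (by linarith)]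
  set S := (fun ω : Omega => fun i : Fin (n + 1) => ω i.val) '' Γ
  have hc : S.ncard ≤ 2 ^ (n + 1) := by
    have := Set.ncard_le_card S
    simpa using this
  rcases Nat.eq_zero_or_pos S.ncard with h0 | h0
  · rw [h0]
    simp only [Nat.cast_zero, Real.log_zero]
    positivity
  · have h1 : Real.log S.ncard ≤ Real.log ((2 : ℝ) ^ (n + 1)) :=
      Real.log_le_log (by exact_mod_cast h0) (by exact_mod_cast hc)
    rw [Real.log_pow] at h1
    push_cast at h1
    nlinarith

/-- If `Γ` contains all block strings, or (for `d = true`) all their complements, then it has at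
least `2 ^ m` prefixes of length `5 * m + 1`. -/
lemma two_pow_le_ncard (Γ : Set Omega) (d : Bool)
    (hΓ : ∀ c, (fun n => xor d (blockString c n)) ∈ Γ) (m : ℕ) :
    2 ^ m ≤ ((fun ω : Omega => fun i : Fin (5 * m + 1) => ω i.val) '' Γ).ncard := by
  let ext : (Fin m → Bool) → ℕ → Bool := fun c i => if h : i < m then c ⟨i, h⟩ else false
  let F : (Fin m → Bool) →
      ((fun ω : Omega => fun i : Fin (5 * m + 1) => ω i.val) '' Γ : Set _) :=
    fun c => ⟨_, _, hΓ (ext c), rfl⟩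
  have hF : Function.Injective F := by
    intro c c' h
    funext i
    have h1 := congrFun (congrArg Subtype.val h) ⟨5 * i.val + 2, by omega⟩
    simpa [F, blockString_read, ext] using h1
  have := Nat.card_le_card_of_injective F hF
  rw [Nat.card_coe_set_eq] at this
  simpa using this

lemma growthRate_pos (Γ : Set Omega) (d : Bool)
    (hΓ : ∀ c, (fun n => xor d (blockString c n)) ∈ Γ) : 0 < growthRate Γ := by
  have hl : 0 < Real.log 2 := Real.log_pos (by norm_num)
  refine lt_of_lt_of_le (show 0 < Real.log 2 / 5 by positivity) ?_
  refine le_limsup_of_frequently_le ?_ (isBoundedUnder_growth Γ)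
  rw [frequently_atTop]
  intro N
  -- `N + 1` rather than `N`, so that the denominator is not zero.
  refine ⟨5 * (N + 1), by omega, ?_⟩
  have h := two_pow_le_ncard Γ d hΓ (N + 1)
  have h1 := Real.log_le_log (by positivity) ((Nat.cast_le (α := ℝ)).2 h)
  rw [Nat.cast_pow, Real.log_pow, Nat.cast_ofNat] at h1
  rw [le_div_iff₀ (by positivity)]
  refine le_trans (le_of_eq ?_) h1
  push_cast
  ring

/-- If (α,β) is admissible with α = 011α', β = 100β', and α' begins with 1 or β' begins with 0,
then (α,β) is non-null. -/
theorem stmt7 (α β : Omega) (hadm : admissible α β) (hα2 : α 2 = true) (hβ2 : β 2 = false)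
    (h3 : α 3 = true ∨ β 3 = false) :
    0 < growthRate (addr α β) := by
  obtain ⟨-, hα1, -, hβ1, -, -⟩ := hadm
  rcases h3 with h3 | h3
  · refine growthRate_pos _ false fun c => Or.inl fun n => ?_
    rintro ⟨h1, h2⟩
    have hb := blockString_no_two_false c (n + 1)
    have ha := blockString_no_three_true c (n + 1)
    cases h0 : blockString c n
    · refine not_lexLt_of_ones 4 ?_ ?_ ?_ h1
      · intro i hi hi0; interval_cases i <;> assumption
      · simpa [iterate_shift_apply] using h0
      · rcases ha with ha | ha | ha
        · exact ⟨1, by simp, by simp, by simpa [iterate_shift_apply] using ha⟩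
        · exact ⟨2, by simp, by simp, by simpa [iterate_shift_apply] using ha⟩
        · exact ⟨3, by simp, by simp, by simpa [iterate_shift_apply] using ha⟩
    · refine not_lexLe_of_zeros 3 ?_ ?_ ?_ h2
      · intro i hi hi0; interval_cases i <;> assumption
      · simpa [iterate_shift_apply] using h0
      · rcases hb with hb | hb
        · exact ⟨1, by simp, by simp, by simpa [iterate_shift_apply] using hb⟩
        · exact ⟨2, by simp, by simp, by simpa [iterate_shift_apply] using hb⟩
  · -- Complementing the letters exchanges the roles of `α` and `β`.
    refine growthRate_pos _ true fun c => Or.inl fun n => ?_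
    rintro ⟨h1, h2⟩
    have hb := blockString_no_two_false c (n + 1)
    have ha := blockString_no_three_true c (n + 1)
    cases h0 : blockString c n
    · refine not_lexLe_of_zeros 4 ?_ ?_ ?_ h2
      · intro i hi hi0; interval_cases i <;> assumption
      · simpa [iterate_shift_apply] using h0
      · rcases ha with ha | ha | ha
        · exact ⟨1, by simp, by simp, by simpa [iterate_shift_apply] using ha⟩
        · exact ⟨2, by simp, by simp, by simpa [iterate_shift_apply] using ha⟩
        · exact ⟨3, by simp, by simp, by simpa [iterate_shift_apply] using ha⟩
    · refine not_lexLt_of_ones 3 ?_ ?_ ?_ h1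
      · intro i hi hi0; interval_cases i <;> assumption
      · simpa [iterate_shift_apply] using h0
      · rcases hb with hb | hb
        · exact ⟨1, by simp, by simp, by simpa [iterate_shift_apply] using hb⟩
        · exact ⟨2, by simp, by simp, by simpa [iterate_shift_apply] using hb⟩
end

section
/- If (α, β) is an admissible and non-null pair, then there exists x ∈ (0,1) such that π_x(α) = π_x(β). -/
/-!
The zero is exhibited explicitly: with `h` the growth rate of the address space `Γ`, the number
`r = exp (-h)` satisfies `∑ (β_k - α_k) r^k = 0`.

Let `C_n(σ)` (`cnt`) be the number of length-`n` prefixes of addresses strictly below `σ`, and let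
`D_n = C_n(Sα) - C_n(Sβ)` (`dif`). If `σ` lies outside the gap between `α` and `β`, removing the
first letter gives `C_{n+1}(σ) = C_n(Sσ) + σ_0 D_n` up to a bounded error (`cnt_step`): all addresses
starting with `0` are the `0ω` with `ω` below `Sα`, and all those starting with `1` are the `1ω` with
`ω` above `Sβ`. The bounded errors absorb every question about boundary points, so the two address
spaces can be treated together. Iterating along an orbit that avoids the gap,
`C_n(σ) = ∑_{k<n} σ_k D_{n-1-k} + O(n)` (`cnt_formula`).

Admissibility says precisely that the orbits of `α` and `β` avoid the gap. No address lies strictly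
between `α` and `β`, so `C_n(α)` and `C_n(β)` differ by at most `1`, and hence
`∑_{k<n} (β_k - α_k) D_{n-1-k} = O(n)` (`conv_bound`). Applied to `1^∞`, the formula bounds the total
number of prefixes by `∑_{k<n} D_k + O(n)` (`tot_le`).

The number `g_n` of prefixes is submultiplicative, so by Fekete's lemma `g_n ≥ r^{-n}` for all `n`
while `∑ g_n x^n` converges for `0 < x < r`. Thus `∑ g_n x^n` tends to infinity as `x` increases to
`r`. On the other hand, `(∑ (β_k - α_k) x^k) (∑ D_n x^n)` is bounded for `x < r < 1`; if the first
factor did not vanish at `r`, then `∑ D_n x^n`, and with it `∑ g_n x^n`, would stay bounded near `r`.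
-/


open Filter Set

/-! ### Lexicographic order -/

lemma lexLt_iff (σ ω : Omega) : lexLt σ ω ↔ toLex σ < toLex ω := by
  constructor
  · rintro ⟨k, h1, h2, h3⟩
    exact ⟨k, h1, by simp [h2, h3]⟩
  · rintro ⟨k, h1, h2⟩
    have h2' : σ k < ω k := h2
    rw [Bool.lt_iff] at h2'
    exact ⟨k, h1, h2'.1, h2'.2⟩

lemma lexLe_iff (σ ω : Omega) : lexLe σ ω ↔ toLex σ ≤ toLex ω := by
  rw [lexLe, lexLt_iff, le_iff_eq_or_lt]; rfl

lemma lexLt_of_bits {σ ω : Omega} (h1 : σ 0 = false) (h2 : ω 0 = true) : lexLt σ ω :=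
  ⟨0, by simp, h1, h2⟩

lemma lexLt_shift_iff {σ ω : Omega} (h : σ 0 = ω 0) :
    lexLt (shift σ) (shift ω) ↔ lexLt σ ω := by
  constructor
  · rintro ⟨k, h1, h2, h3⟩
    refine ⟨k + 1, ?_, h2, h3⟩
    intro i hi
    cases i with
    | zero => exact h
    | succ i => exact h1 i (by omega)
  · rintro ⟨k, h1, h2, h3⟩
    cases k with
    | zero => simp_all
    | succ k => exact ⟨k, fun i hi => h1 (i + 1) (by omega), h2, h3⟩

lemma shift_inj {σ ω : Omega} (h : σ 0 = ω 0) (h' : shift σ = shift ω) : σ = ω := by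
  funext i
  cases i with
  | zero => exact h
  | succ i => exact congrFun h' i

lemma lexLe_shift_iff {σ ω : Omega} (h : σ 0 = ω 0) :
    lexLe (shift σ) (shift ω) ↔ lexLe σ ω := by
  rw [lexLe, lexLe, lexLt_shift_iff h]
  constructor
  · rintro (h' | h')
    · exact Or.inl (shift_inj h h')
    · exact Or.inr h'
  · rintro (rfl | hlt)
    · exact Or.inl rfl
    · exact Or.inr hlt

/-- The string `bω₀ω₁⋯`. -/
def consW (b : Bool) (ω : Omega) : Omega := fun n => Nat.casesOn n b ω

@[simp] lemma consW_zero (b : Bool) (ω : Omega) : consW b ω 0 = b := rfl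

@[simp] lemma shift_consW (b : Bool) (ω : Omega) : shift (consW b ω) = ω := rfl

/-! ### Counting prefixes -/

/-- The prefix of length `n`. -/
def restr (n : ℕ) (ω : Omega) : Fin n → Bool := fun i => ω i.val

/-- The number of length-`n` prefixes of members of `A`. -/
noncomputable def wc (n : ℕ) (A : Set Omega) : ℕ := (restr n '' A).ncard

lemma wc_mono (n : ℕ) {A B : Set Omega} (h : A ⊆ B) : wc n A ≤ wc n B :=
  Set.ncard_le_ncard (Set.image_mono h) (Set.toFinite _)

lemma wc_union_le (n : ℕ) (A B : Set Omega) : wc n (A ∪ B) ≤ wc n A + wc n B := by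
  unfold wc
  rw [Set.image_union]
  exact Set.ncard_union_le _ _

lemma wc_insert_le (n : ℕ) (a : Omega) (A : Set Omega) : wc n (insert a A) ≤ wc n A + 1 := by
  unfold wc
  rw [Set.image_insert_eq]
  exact Set.ncard_insert_le _ _

lemma wc_shift (n : ℕ) (b : Bool) (A : Set Omega) (h : ∀ ω ∈ A, ω 0 = b) :
    wc (n + 1) A = wc n (shift '' A) := by
  unfold wc
  have : restr n '' (shift '' A) = (fun w : Fin (n+1) → Bool => fun i : Fin n => w i.succ) ''
      (restr (n+1) '' A) := by
    rw [Set.image_image, Set.image_image]; rfl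
  rw [this]
  symm
  apply Set.InjOn.ncard_image
  rintro _ ⟨ω, hω, rfl⟩ _ ⟨ω', hω', rfl⟩ hh
  funext i
  refine Fin.cases ?_ (fun j => ?_) i
  · show ω 0 = ω' 0
    rw [h _ hω, h _ hω']
  · exact congrFun hh j

lemma wc_split (n : ℕ) (A B : Set Omega) (hA : ∀ ω ∈ A, ω 0 = false) (hB : ∀ ω ∈ B, ω 0 = true) :
    wc (n + 1) (A ∪ B) = wc (n + 1) A + wc (n + 1) B := by
  unfold wc
  rw [Set.image_union, Set.ncard_union_eq _ (Set.toFinite _) (Set.toFinite _)]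
  rw [Set.disjoint_left]
  rintro _ ⟨ω, hω, rfl⟩ ⟨ω', hω', hh⟩
  have : ω' 0 = ω 0 := congrFun hh 0
  rw [hA _ hω, hB _ hω'] at this
  cases this

/-- The prefix map is monotone: a string squeezed between two strings with a common prefix has
that prefix as well. -/
lemma restr_squeeze {n : ℕ} {ω τ ω' : Omega} (h1 : lexLt ω τ) (h2 : lexLe τ ω')
    (h : restr n ω = restr n ω') : restr n ω = restr n τ := by
  obtain ⟨k, a1, a2, a3⟩ := h1
  have hh : ∀ i < n, ω i = ω' i := fun i hi => congrFun h ⟨i, hi⟩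
  by_cases hk : n ≤ k
  · funext i
    exact a1 i (by omega)
  · exfalso
    push Not at hk
    rcases h2 with rfl | ⟨j, b1, b2, b3⟩
    · have := hh k hk
      simp_all
    · rcases lt_trichotomy j k with hjk | rfl | hjk
      · have := hh j (by omega)
        have := a1 j hjk
        simp_all
      · simp_all
      · have := b1 k hjk
        have := hh k hk
        simp_all

/-- Sets on the two sides of a threshold `τ` share at most one prefix. -/
lemma wc_sep (n : ℕ) (τ : Omega) (A B : Set Omega) (hA : ∀ ω ∈ A, lexLt ω τ)
    (hB : ∀ ω ∈ B, lexLe τ ω) : wc n A + wc n B ≤ wc n (A ∪ B) + 1 := by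
  unfold wc
  rw [Set.image_union]
  have h := Set.ncard_union_add_ncard_inter (restr n '' A) (restr n '' B)
    (Set.toFinite _) (Set.toFinite _)
  have h2 : ((restr n '' A) ∩ (restr n '' B)).ncard ≤ 1 := by
    have : (restr n '' A) ∩ (restr n '' B) ⊆ {restr n τ} := by
      rintro _ ⟨⟨ω, hω, rfl⟩, ⟨ω', hω', hh⟩⟩
      exact restr_squeeze (hA _ hω) (hB _ hω') hh.symm
    calc _ ≤ ({restr n τ} : Set (Fin n → Bool)).ncard :=
          Set.ncard_le_ncard this (Set.toFinite _)
      _ = 1 := Set.ncard_singleton _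
  omega

lemma wc_submul (Γ : Set Omega) (hΓ : ∀ ω ∈ Γ, shift ω ∈ Γ) (m n : ℕ) :
    wc (m + n) Γ ≤ wc m Γ * wc n Γ := by
  have hit : ∀ k, ∀ ω ∈ Γ, (fun i => ω (k + i)) ∈ Γ := by
    intro k
    induction k with
    | zero => intro ω h; simpa using h
    | succ k ih =>
      intro ω h
      have := ih _ (hΓ ω h)
      convert this using 2 with i
      show _ = ω (k + i + 1)
      congr 1
      omega
  unfold wc
  rw [← Set.ncard_prod]
  refine le_trans (Set.ncard_le_ncard (t := (fun p : (Fin m → Bool) × (Fin n → Bool) =>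
    Fin.append p.1 p.2) '' ((restr m '' Γ) ×ˢ (restr n '' Γ))) ?_ (Set.toFinite _))
    (Set.ncard_image_le (Set.toFinite _))
  rintro _ ⟨ω, hω, rfl⟩
  refine ⟨(restr m ω, restr n (fun i => ω (m + i))), ⟨⟨ω, hω, rfl⟩, ⟨_, hit m ω hω, rfl⟩⟩, ?_⟩
  funext i
  refine Fin.addCases (fun j => ?_) (fun j => ?_) i
  · simp [restr]
  · simp [restr]

/-! ### The address space -/

lemma addr_shift {α β ω : Omega} (h : ω ∈ addr α β) : shift ω ∈ addr α β := by
  rcases h with h | h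
  · exact Or.inl fun n => h (n + 1)
  · exact Or.inr fun n => h (n + 1)

lemma addr_le_or {α β ω : Omega} (h : ω ∈ addr α β) : lexLe ω α ∨ lexLe β ω := by
  rcases h with h | h
  all_goals
    have := h 0
    simp only [Function.iterate_zero, id, lexLt_iff, lexLe_iff] at this ⊢
    by_contra! hc
  · exact this ⟨hc.1, hc.2.le⟩
  · exact this ⟨hc.1.le, hc.2⟩

/-- Outside the gap between `α` and `β`, membership in the address space is inherited from the
shift. -/
lemma addr_of_shift {α β ω : Omega} (h : shift ω ∈ addr α β) (h' : lexLt ω α ∨ lexLt β ω) :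
    ω ∈ addr α β := by
  simp only [lexLt_iff] at h'
  rcases h with h | h
  · left
    intro n
    cases n with
    | zero =>
      simp only [Function.iterate_zero, id, lexLt_iff, lexLe_iff]
      rintro ⟨h1, h2⟩
      rcases h' with h' | h'
      · exact absurd h1 h'.not_gt
      · exact absurd h2 h'.not_ge
    | succ n => exact h n
  · right
    intro n
    cases n with
    | zero =>
      simp only [Function.iterate_zero, id, lexLt_iff, lexLe_iff]
      rintro ⟨h1, h2⟩
      rcases h' with h' | h'
      · exact absurd h1 h'.not_ge
      · exact absurd h2 h'.not_gt
    | succ n => exact h n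

/-- The number of length-`n` prefixes of the addresses strictly below `σ`. -/
noncomputable def cnt (α β : Omega) (n : ℕ) (σ : Omega) : ℕ :=
  wc n {ω ∈ addr α β | lexLt ω σ}

/-- The number of length-`n` prefixes of addresses. -/
noncomputable def tot (α β : Omega) (n : ℕ) : ℕ := wc n (addr α β)

/-- The signed count of prefixes of addresses between `Sβ` and `Sα`. -/
noncomputable def dif (α β : Omega) (n : ℕ) : ℝ :=
  (cnt α β n (shift α) : ℝ) - cnt α β n (shift β)

/-- Points outside the open gap `(α,β)`, on the side determined by the leading bit. -/
def Good (α β σ : Omega) : Prop := (σ 0 = false ∧ lexLe σ α) ∨ (σ 0 = true ∧ lexLe β σ)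

lemma good_of {α β σ : Omega} (hα : α 0 = false) (hβ : β 0 = true)
    (h : lexLe σ α ∨ lexLe β σ) : Good α β σ := by
  rcases hb : σ 0 with _ | _
  · left
    refine ⟨hb, h.resolve_right ?_⟩
    have := lexLt_of_bits hb hβ
    simp only [lexLt_iff, lexLe_iff] at *
    exact this.not_ge
  · right
    refine ⟨hb, h.resolve_left ?_⟩
    have := lexLt_of_bits hα hb
    simp only [lexLt_iff, lexLe_iff] at *
    exact this.not_ge

lemma cnt_step_false {α β σ : Omega} (h0 : σ 0 = false) (h1 : lexLe σ α) (n : ℕ) :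
    cnt α β (n + 1) σ = cnt α β n (shift σ) := by
  have hbit : ∀ ω ∈ {ω ∈ addr α β | lexLt ω σ}, ω 0 = false := by
    rintro ω ⟨-, h⟩
    by_contra hc
    have := lexLt_of_bits h0 (by simpa using hc : ω 0 = true)
    rw [lexLt_iff] at h this
    exact absurd h this.not_gt
  unfold cnt
  rw [wc_shift n false _ hbit]
  congr 1
  ext ω
  constructor
  · rintro ⟨ω, h, rfl⟩
    exact ⟨addr_shift h.1, (lexLt_shift_iff ((hbit ω h).trans h0.symm)).2 h.2⟩
  · rintro ⟨h, h'⟩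
    have h2 : lexLt (consW false ω) σ := (lexLt_shift_iff h0.symm).1 h'
    refine ⟨consW false ω, ⟨addr_of_shift h (Or.inl ?_), h2⟩, rfl⟩
    rw [lexLt_iff] at *
    rw [lexLe_iff] at h1
    exact h2.trans_le h1

lemma cnt_step_true {α β σ : Omega} (hα : α 0 = false) (hβ : β 0 = true)
    (h0 : σ 0 = true) (h1 : lexLe β σ) (n : ℕ) :
    |(cnt α β (n + 1) σ : ℝ) - (cnt α β n (shift σ) + dif α β n)| ≤ 3 := by
  set A : Set Omega := {ω ∈ addr α β | ω 0 = false} with hA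
  set B : Set Omega := {ω ∈ addr α β | ω 0 = true ∧ lexLt ω σ} with hB
  have hAB : {ω ∈ addr α β | lexLt ω σ} = A ∪ B := by
    ext ω
    constructor
    · rintro ⟨h, h'⟩
      rcases hb : ω 0 with _ | _
      · exact Or.inl ⟨h, hb⟩
      · exact Or.inr ⟨h, hb, h'⟩
    · rintro (⟨h, h'⟩ | ⟨h, -, h'⟩)
      · exact ⟨h, lexLt_of_bits h' h0⟩
      · exact ⟨h, h'⟩
  have e1 : cnt α β (n + 1) σ = wc n (shift '' A) + wc n (shift '' B) := by
    unfold cnt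
    rw [hAB, wc_split n A B (fun ω h => h.2) (fun ω h => h.2.1),
      wc_shift n false A (fun ω h => h.2), wc_shift n true B (fun ω h => h.2.1)]
  have a1 : cnt α β n (shift α) ≤ wc n (shift '' A) := by
    refine wc_mono n ?_
    rintro ω ⟨h, h'⟩
    exact ⟨consW false ω, ⟨addr_of_shift h (Or.inl ((lexLt_shift_iff hα.symm).1 h')), rfl⟩, rfl⟩
  have a2 : wc n (shift '' A) ≤ cnt α β n (shift α) + 1 := by
    refine le_trans (wc_mono n ?_) (wc_insert_le n (shift α) _)
    rintro _ ⟨ω, ⟨h, hb⟩, rfl⟩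
    rcases good_of hα hβ (addr_le_or h) with ⟨-, hg⟩ | ⟨hg, -⟩
    · rcases (lexLe_shift_iff (hb.trans hα.symm)).2 hg with hg | hg
      · exact Or.inl hg
      · exact Or.inr ⟨addr_shift h, hg⟩
    · simp [hb] at hg
  have b0 : ∀ ω ∈ shift '' B, lexLe (shift β) ω := by
    rintro _ ⟨ω, ⟨h, hb, -⟩, rfl⟩
    rcases good_of hα hβ (addr_le_or h) with ⟨hg, -⟩ | ⟨-, hg⟩
    · simp [hb] at hg
    · exact (lexLe_shift_iff (hβ.trans hb.symm)).2 hg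
  have hs : lexLe (shift β) (shift σ) := (lexLe_shift_iff (hβ.trans h0.symm)).2 h1
  have b1 : cnt α β n (shift σ) ≤ cnt α β n (shift β) + wc n (shift '' B) + 1 := by
    refine le_trans (wc_mono n
      (B := {ω ∈ addr α β | lexLt ω (shift β)} ∪ insert (shift β) (shift '' B)) ?_) ?_
    · rintro ω ⟨h, h'⟩
      rcases lt_trichotomy (toLex ω) (toLex (shift β)) with hc | hc | hc
      · exact Or.inl ⟨h, (lexLt_iff _ _).2 hc⟩
      · exact Or.inr (Or.inl (toLex.injective hc))
      · refine Or.inr (Or.inr ⟨consW true ω, ⟨addr_of_shift h (Or.inr ?_), rfl, ?_⟩, rfl⟩)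
        · exact (lexLt_shift_iff hβ).1 ((lexLt_iff _ _).2 hc)
        · exact (lexLt_shift_iff h0.symm).1 h'
    · have h3 := wc_union_le n {ω ∈ addr α β | lexLt ω (shift β)} (insert (shift β) (shift '' B))
      have h4 := wc_insert_le n (shift β) (shift '' B)
      unfold cnt
      omega
  have b2 : cnt α β n (shift β) + wc n (shift '' B) ≤ cnt α β n (shift σ) + 1 := by
    refine le_trans (wc_sep n (shift β) _ _ (fun ω h => h.2) b0) ?_
    refine Nat.add_le_add_right (wc_mono n ?_) 1
    rintro ω (⟨h, h'⟩ | ⟨ω, ⟨h, hb, h'⟩, rfl⟩)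
    · refine ⟨h, ?_⟩
      rw [lexLt_iff] at *
      rw [lexLe_iff] at hs
      exact h'.trans_le hs
    · exact ⟨addr_shift h, (lexLt_shift_iff (hb.trans h0.symm)).2 h'⟩
  rw [e1, dif]
  have a1' : (cnt α β n (shift α) : ℝ) ≤ wc n (shift '' A) := by exact_mod_cast a1
  have a2' : (wc n (shift '' A) : ℝ) ≤ cnt α β n (shift α) + 1 := by exact_mod_cast a2
  have b1' : (cnt α β n (shift σ) : ℝ) ≤ cnt α β n (shift β) + wc n (shift '' B) + 1 := by
    exact_mod_cast b1
  have b2' : (cnt α β n (shift β) : ℝ) + wc n (shift '' B) ≤ cnt α β n (shift σ) + 1 := by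
    exact_mod_cast b2
  push_cast
  rw [abs_le]
  constructor <;> linarith

lemma cnt_step {α β σ : Omega} (hα : α 0 = false) (hβ : β 0 = true) (h : Good α β σ) (n : ℕ) :
    |(cnt α β (n + 1) σ : ℝ) - (cnt α β n (shift σ) + b2r (σ 0) * dif α β n)| ≤ 3 := by
  rcases h with ⟨h0, h1⟩ | ⟨h0, h1⟩
  · rw [cnt_step_false h0 h1, h0]
    simp [b2r]
  · rw [h0]
    simpa [b2r] using cnt_step_true hα hβ h0 h1 n

/-- Iterating the one-step recursion along the orbit of `σ` expresses `cnt` as a convolution of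
the bits of `σ` with `dif`, up to a linearly growing error. -/
lemma cnt_formula {α β : Omega} (hα : α 0 = false) (hβ : β 0 = true) (n : ℕ) :
    ∀ σ : Omega, (∀ k, Good α β (shift^[k] σ)) →
    |(cnt α β n σ : ℝ) - ∑ k ∈ Finset.range n, b2r (σ k) * dif α β (n - 1 - k)| ≤ 3 * n + 1 := by
  induction n with
  | zero =>
    intro σ _
    have : cnt α β 0 σ ≤ 1 := by
      unfold cnt wc
      refine (Set.ncard_le_card _).trans (by simp)
    have : (cnt α β 0 σ : ℝ) ≤ 1 := by exact_mod_cast this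
    simpa using this
  | succ n ih =>
    intro σ h
    have h1 := cnt_step hα hβ (h 0) n
    have h2 := ih (shift σ) (fun k => h (k + 1))
    simp only [Function.iterate_zero, id] at h1
    rw [Finset.sum_range_succ']
    have e : ∀ k ∈ Finset.range n, b2r (σ (k+1)) * dif α β (n + 1 - 1 - (k + 1))
        = b2r (shift σ k) * dif α β (n - 1 - k) := by
      intro k _
      have : n + 1 - 1 - (k + 1) = n - 1 - k := by omega
      rw [this]; rfl
    rw [Finset.sum_congr rfl e]
    simp only [Nat.add_sub_cancel, Nat.sub_zero]
    rw [abs_le] at *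
    push_cast
    constructor <;> linarith [h1.1, h1.2, h2.1, h2.2]

lemma cnt_gap {α β : Omega} (hα : α 0 = false) (hβ : β 0 = true) (n : ℕ) :
    |(cnt α β n β : ℝ) - cnt α β n α| ≤ 1 := by
  have hab := lexLt_of_bits hα hβ
  rw [lexLt_iff] at hab
  have h1 : cnt α β n α ≤ cnt α β n β := wc_mono n fun ω ⟨h, h'⟩ => ⟨h, by
    rw [lexLt_iff] at *; exact h'.trans hab⟩
  have h2 : cnt α β n β ≤ cnt α β n α + 1 := by
    refine le_trans (wc_mono n ?_) (wc_insert_le n α _)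
    rintro ω ⟨h, h'⟩
    rcases addr_le_or h with hc | hc
    · rcases hc with hc | hc
      · exact Or.inl hc
      · exact Or.inr ⟨h, hc⟩
    · rw [lexLt_iff] at h'
      rw [lexLe_iff] at hc
      exact absurd h' hc.not_gt
  have h1' : (cnt α β n α : ℝ) ≤ cnt α β n β := by exact_mod_cast h1
  have h2' : (cnt α β n β : ℝ) ≤ cnt α β n α + 1 := by exact_mod_cast h2
  rw [abs_le]
  constructor <;> linarith

lemma cnt_le_tot (α β : Omega) (n : ℕ) (σ : Omega) : cnt α β n σ ≤ tot α β n :=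
  wc_mono n fun _ h => h.1

lemma abs_dif_le (α β : Omega) (n : ℕ) : |dif α β n| ≤ tot α β n := by
  have h1 : (cnt α β n (shift α) : ℝ) ≤ tot α β n := by exact_mod_cast cnt_le_tot _ _ _ _
  have h2 : (cnt α β n (shift β) : ℝ) ≤ tot α β n := by exact_mod_cast cnt_le_tot _ _ _ _
  have h3 : (0 : ℝ) ≤ cnt α β n (shift α) := by positivity
  have h4 : (0 : ℝ) ≤ cnt α β n (shift β) := by positivity
  rw [dif, abs_le]
  constructor <;> linarith

/-- The string `1^∞` dominates every other address, so its count is the total count. -/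
lemma tot_le {α β : Omega} (hα : α 0 = false) (hβ : β 0 = true) (n : ℕ) :
    (tot α β n : ℝ) ≤ ∑ k ∈ Finset.range n, dif α β (n - 1 - k) + (3 * n + 2) := by
  set τ : Omega := fun _ => true with hτ
  have hit : ∀ k, shift^[k] τ = τ := by
    intro k
    induction k with
    | zero => rfl
    | succ k ih => rw [Function.iterate_succ_apply]; exact ih
  have hmax : ∀ ω : Omega, lexLe ω τ := by
    intro ω
    rw [lexLe_iff]
    by_contra! hc
    obtain ⟨k, -, h, -⟩ := (lexLt_iff _ _).2 hc
    cases h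
  have h1 := cnt_formula hα hβ n τ
    (fun k => by rw [hit]; exact Or.inr ⟨rfl, hmax β⟩)
  have h2 : tot α β n ≤ cnt α β n τ + 1 := by
    refine le_trans (wc_mono n ?_) (wc_insert_le n τ _)
    intro ω h
    rcases hmax ω with hc | hc
    · exact Or.inl hc
    · exact Or.inr ⟨h, hc⟩
  have h2' : (tot α β n : ℝ) ≤ cnt α β n τ + 1 := by exact_mod_cast h2
  have e : ∀ k, b2r (τ k) = 1 := fun k => by simp [b2r, hτ]
  simp only [e, one_mul] at h1
  rw [abs_le] at h1
  linarith [h1.1, h1.2]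

/-- The kneading identity up to linear error: the counts below `α` and below `β` agree up to `1`. -/
lemma conv_bound {α β : Omega} (hadm : admissible α β) (n : ℕ) :
    |∑ k ∈ Finset.range n, (b2r (β k) - b2r (α k)) * dif α β (n - 1 - k)| ≤ 6 * n + 3 := by
  obtain ⟨hα, -, hβ, -, ha, hb⟩ := hadm
  have h1 := cnt_formula hα hβ n α (fun k => good_of hα hβ (by
    have := ha k
    simp only [lexLt_iff, lexLe_iff] at *
    by_contra! hc
    exact this ⟨hc.1, hc.2.le⟩))
  have h2 := cnt_formula hα hβ n β (fun k => good_of hα hβ (by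
    have := hb k
    simp only [lexLt_iff, lexLe_iff] at *
    by_contra! hc
    exact this ⟨hc.1.le, hc.2⟩))
  have h3 := cnt_gap hα hβ n
  simp only [sub_mul, Finset.sum_sub_distrib]
  rw [abs_le] at *
  constructor <;> linarith [h1.1, h1.2, h2.1, h2.2, h3.1, h3.2]

lemma tot_pos {α β : Omega} (hadm : admissible α β) (n : ℕ) : 1 ≤ tot α β n := by
  have : α ∈ addr α β := Or.inl hadm.2.2.2.2.1
  unfold tot wc
  exact (Set.ncard_pos (Set.toFinite _)).2 ⟨_, α, this, rfl⟩

/-! ### Exponential growth and generating functions -/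

/-- Fekete's lemma for the prefix count: the growth rate is a limit and an infimum. -/
lemma growth_facts {α β : Omega} (hadm : admissible α β) :
    Tendsto (fun n : ℕ => Real.log (tot α β n) / n) atTop (nhds (growthRate (addr α β))) ∧
    ∀ n : ℕ, Real.exp (growthRate (addr α β) * n) ≤ tot α β n := by
  set u : ℕ → ℝ := fun n => Real.log (tot α β n) with hu
  have hpos : ∀ n, (1 : ℝ) ≤ tot α β n := fun n => by exact_mod_cast tot_pos hadm n
  have hsub : Subadditive u := by
    intro m n
    have h := wc_submul (addr α β) (fun ω h => addr_shift h) m n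
    have h' : (tot α β (m + n) : ℝ) ≤ tot α β m * tot α β n := by exact_mod_cast h
    have hm := hpos m
    have hn := hpos n
    have hmn := hpos (m + n)
    simp only [hu]
    rw [← Real.log_mul (by positivity) (by positivity)]
    exact Real.log_le_log (by positivity) h'
  have hbdd : BddBelow (Set.range fun n => u n / n) := by
    refine ⟨0, ?_⟩
    rintro _ ⟨n, rfl⟩
    have := Real.log_nonneg (hpos n)
    simp only [hu]
    positivity
  have hlim := hsub.tendsto_lim hbdd
  have hg : growthRate (addr α β) = hsub.lim := by
    have h1 : Tendsto (fun n : ℕ => u (n + 1) / n) atTop (nhds hsub.lim) := by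
      have h2 := (tendsto_add_atTop_iff_nat 1).2 hlim
      have h3 : Tendsto (fun n : ℕ => 1 + 1 / (n : ℝ)) atTop (nhds (1 + 0)) :=
        tendsto_const_nhds.add tendsto_one_div_atTop_nhds_zero_nat
      have h4 := h2.mul h3
      rw [add_zero, mul_one] at h4
      refine h4.congr' ?_
      filter_upwards [eventually_gt_atTop 0] with n hn
      have : (0 : ℝ) < n := by exact_mod_cast hn
      push_cast
      field_simp
    exact h1.limsup_eq
  refine ⟨hg ▸ hlim, fun n => ?_⟩
  rcases Nat.eq_zero_or_pos n with rfl | hn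
  · simpa using hpos 0
  · have h1 := hsub.lim_le_div hbdd hn.ne'
    rw [← hg] at h1
    have hn' : (0 : ℝ) < n := by exact_mod_cast hn
    rw [le_div_iff₀ hn'] at h1
    calc _ ≤ Real.exp (u n) := Real.exp_le_exp.2 h1
      _ = _ := Real.exp_log (by linarith [hpos n])

lemma tot_summable {α β : Omega} (hadm : admissible α β) {x : ℝ} (hx : 0 < x)
    (hx1 : x < Real.exp (-growthRate (addr α β))) :
    Summable fun n : ℕ => (tot α β n : ℝ) * x ^ n := by
  set h := growthRate (addr α β) with hh
  -- an exponent strictly between the growth rate and `-log x`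
  obtain ⟨c, hc1, hc2⟩ := exists_between (show h < -Real.log x by
    have := Real.log_lt_log hx hx1
    rw [Real.log_exp] at this
    linarith)
  have hq : Real.exp c * x < 1 := by
    calc Real.exp c * x = Real.exp (c + Real.log x) := by rw [Real.exp_add, Real.exp_log hx]
      _ < 1 := by rw [Real.exp_lt_one_iff]; linarith
  refine Summable.of_norm_bounded_eventually_nat
    (summable_geometric_of_lt_one (by positivity) hq) ?_
  have := (growth_facts hadm).1.eventually (gt_mem_nhds hc1)
  filter_upwards [this, eventually_gt_atTop 0] with n hn hn0
  have hn' : (0 : ℝ) < n := by exact_mod_cast hn0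
  rw [div_lt_iff₀ hn'] at hn
  have hp : (0 : ℝ) < tot α β n := by exact_mod_cast tot_pos hadm n
  rw [Real.norm_of_nonneg (by positivity), mul_pow]
  gcongr
  rw [← Real.exp_nat_mul, mul_comm, ← Real.exp_log hp]
  exact Real.exp_le_exp.2 hn.le

lemma abs_coef_le (α β : Omega) (k : ℕ) : |b2r (β k) - b2r (α k)| ≤ 1 := by
  unfold b2r
  split_ifs <;> simp

/-- The kneading series `∑ (β_k - α_k) x^k`. -/
noncomputable def knead (α β : Omega) (x : ℝ) : ℝ := ∑' k : ℕ, (b2r (β k) - b2r (α k)) * x ^ k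

lemma summable_of_coef {c : ℕ → ℝ} (hc : ∀ k, |c k| ≤ 1) {x : ℝ} (hx0 : 0 ≤ x) (hx : x < 1) :
    Summable fun k => ‖c k * x ^ k‖ := by
  refine Summable.of_nonneg_of_le (fun _ => norm_nonneg _) (fun k => ?_)
    (summable_geometric_of_lt_one hx0 hx)
  rw [norm_mul, Real.norm_eq_abs, Real.norm_of_nonneg (by positivity : (0:ℝ) ≤ x ^ k)]
  exact mul_le_of_le_one_left (by positivity) (hc k)

lemma proj_sub {α β : Omega} {x : ℝ} (hx0 : 0 ≤ x) (hx : x < 1) :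
    proj x β - proj x α = (1 - x) * knead α β x := by
  have hb : ∀ ω : Omega, Summable fun k => b2r (ω k) * x ^ k := fun ω =>
    (summable_of_coef (c := fun k => b2r (ω k))
      (fun k => by unfold b2r; split_ifs <;> simp) hx0 hx).of_norm
  unfold proj knead
  rw [← mul_sub, ← (hb β).tsum_sub (hb α)]
  simp only [sub_mul]

lemma knead_cont {α β : Omega} {r : ℝ} (hr0 : 0 < r) (hr : r < 1) :
    ContinuousAt (knead α β) r := by
  obtain ⟨s, hs1, hs2⟩ := exists_between hr
  have : ContinuousOn (knead α β) (Set.Ioo 0 s) := by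
    refine continuousOn_tsum (u := fun k => s ^ k) (fun k => by fun_prop)
      (summable_geometric_of_lt_one (by linarith) hs2) (fun k x hx => ?_)
    rw [norm_mul, Real.norm_eq_abs, Real.norm_of_nonneg (by have := hx.1; positivity)]
    calc _ ≤ 1 * s ^ k := mul_le_mul (abs_coef_le _ _ _)
          (pow_le_pow_left₀ hx.1.le hx.2.le k) (pow_nonneg hx.1.le _) zero_le_one
      _ = s ^ k := one_mul _
  exact this.continuousAt (Ioo_mem_nhds hr0 hs1)

/-- A convolution bound turned into a bound for the product of the two series. -/
lemma series_bound {c d e : ℕ → ℝ} {x r : ℝ} (hx0 : 0 < x) (hxr : x < r) (hr : r < 1)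
    (hc : ∀ k, |c k| ≤ 1) (hd : Summable fun n => ‖d n * x ^ n‖)
    (he : ∀ n, ∑ k ∈ Finset.range (n + 1), c k * d (n - k) = e n)
    (hen : ∀ n, |e n| ≤ 6 * n + 9) :
    |(∑' k, c k * x ^ k) * ∑' n, d n * x ^ n| ≤ ∑' n : ℕ, (6 * (n : ℝ) + 9) * r ^ n := by
  have hS : Summable fun n : ℕ => (6 * (n : ℝ) + 9) * r ^ n := by
    have h1 := summable_pow_mul_geometric_of_norm_lt_one 1
      (show ‖r‖ < 1 by rwa [Real.norm_of_nonneg (by linarith)])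
    have h2 := summable_geometric_of_lt_one (by linarith : 0 ≤ r) hr
    refine ((h1.mul_left 6).add (h2.mul_left 9)).congr fun n => ?_
    ring
  rw [tsum_mul_tsum_eq_tsum_sum_range_of_summable_norm (summable_of_coef hc hx0.le (hxr.trans hr))
    hd]
  rw [← Real.norm_eq_abs]
  refine tsum_of_norm_bounded hS.hasSum fun n => ?_
  have : ∑ k ∈ Finset.range (n + 1), c k * x ^ k * (d (n - k) * x ^ (n - k)) = e n * x ^ n := by
    rw [← he, Finset.sum_mul]
    refine Finset.sum_congr rfl fun k hk => ?_
    have hk' : k ≤ n := by simpa [Nat.lt_succ_iff] using hk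
    rw [show x ^ n = x ^ k * x ^ (n - k) by rw [← pow_add, Nat.add_sub_cancel' hk']]
    ring
  rw [this, norm_mul, Real.norm_eq_abs, Real.norm_of_nonneg (by positivity)]
  exact mul_le_mul (hen n) (pow_le_pow_left₀ hx0.le hxr.le n) (by positivity) (by positivity)

/-- The reciprocal of the exponential growth factor is a zero of the kneading series. -/
lemma knead_zero {α β : Omega} (hadm : admissible α β) (hnn : 0 < growthRate (addr α β)) :
    knead α β (Real.exp (-growthRate (addr α β))) = 0 := by
  set h := growthRate (addr α β) with hh
  set r := Real.exp (-h) with hr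
  have hr0 : 0 < r := Real.exp_pos _
  have hr1 : r < 1 := by rw [hr, Real.exp_lt_one_iff]; linarith
  by_contra hne
  have hF : Tendsto (fun x => |knead α β x|) (nhdsWithin r (Set.Iio r))
      (nhds |knead α β r|) :=
    ((knead_cont hr0 hr1).abs).tendsto.mono_left nhdsWithin_le_nhds
  set δ := |knead α β r| / 2 with hδ
  have hδ0 : 0 < δ := by have := abs_pos.2 hne; positivity
  have hlt : δ < |knead α β r| := by linarith
  set K := ∑' n : ℕ, (6 * (n : ℝ) + 9) * r ^ n with hK
  have ev1 : ∀ᶠ x in nhdsWithin r (Set.Iio r), δ < |knead α β x| := hF.eventually (lt_mem_nhds hlt)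
  have ev2 : ∀ᶠ x in nhdsWithin r (Set.Iio r), 0 < x :=
    nhdsWithin_le_nhds (lt_mem_nhds hr0)
  have ev3 : ∀ᶠ x in nhdsWithin r (Set.Iio r), x < r := self_mem_nhdsWithin
  -- both bounds on the generating function of `tot`: it dominates a geometric series, yet it is
  -- bounded by the generating function of `dif`
  have key : ∀ᶠ x in nhdsWithin r (Set.Iio r),
      1 / (1 - x / r) ≤ tot α β 0 + (K / δ / (1 - r) + K) := by
    filter_upwards [ev1, ev2, ev3] with x h1 h2 h3
    have hx1 : x < 1 := h3.trans hr1
    have hT := tot_summable hadm h2 h3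
    have hD : Summable fun n => ‖dif α β n * x ^ n‖ := by
      refine Summable.of_nonneg_of_le (fun _ => norm_nonneg _) (fun n => ?_) hT
      rw [norm_mul, Real.norm_eq_abs, Real.norm_of_nonneg (by positivity : (0:ℝ) ≤ x ^ n)]
      exact mul_le_mul_of_nonneg_right (abs_dif_le _ _ _) (by positivity)
    have hbound : |knead α β x * ∑' n, dif α β n * x ^ n| ≤ K := by
      refine series_bound (e := fun n => ∑ k ∈ Finset.range (n + 1),
        (b2r (β k) - b2r (α k)) * dif α β (n - k)) h2 h3 hr1 (abs_coef_le α β) hD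
        (fun n => rfl) (fun n => ?_)
      have := conv_bound hadm (n + 1)
      simp only [Nat.add_sub_cancel] at this
      push_cast at this
      linarith
    have hDb : |∑' n, dif α β n * x ^ n| ≤ K / δ := by
      rw [le_div_iff₀ hδ0]
      rw [abs_mul] at hbound
      nlinarith [abs_nonneg (∑' n, dif α β n * x ^ n)]
    have hlow : 1 / (1 - x / r) ≤ ∑' n, (tot α β n : ℝ) * x ^ n := by
      have hq0 : 0 ≤ x / r := by positivity
      have hq1 : x / r < 1 := (div_lt_one hr0).2 h3
      rw [one_div, ← tsum_geometric_of_lt_one hq0 hq1]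
      refine (summable_geometric_of_lt_one hq0 hq1).tsum_le_tsum (fun n => ?_) hT
      have := (growth_facts hadm).2 n
      have e : (x / r) ^ n = Real.exp (h * n) * x ^ n := by
        rw [div_pow, hr, ← Real.exp_nat_mul, div_eq_mul_inv, ← Real.exp_neg, mul_comm]
        congr 2
        ring
      rw [e]
      exact mul_le_mul_of_nonneg_right this (by positivity)
    have hS : Summable fun n : ℕ => (6 * (n : ℝ) + 9) * r ^ n := by
      have h1 := summable_pow_mul_geometric_of_norm_lt_one 1
        (show ‖r‖ < 1 by rwa [Real.norm_of_nonneg (by linarith)])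
      have h2 := summable_geometric_of_lt_one (by linarith : 0 ≤ r) hr1
      refine ((h1.mul_left 6).add (h2.mul_left 9)).congr fun n => ?_
      ring
    have hK0 : 0 ≤ K := tsum_nonneg fun n => by positivity
    -- the partial sums of `dif` have generating function `D(x) / (1 - x)`
    have hone : ∀ k : ℕ, |(1 : ℝ)| ≤ 1 := fun _ => by simp
    have hprod := tsum_mul_tsum_eq_tsum_sum_range_of_summable_norm
      (summable_of_coef (c := fun _ => (1 : ℝ)) hone h2.le hx1) hD
    have hconv : ∀ n : ℕ, ∑ k ∈ Finset.range (n + 1),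
        1 * x ^ k * (dif α β (n - k) * x ^ (n - k)) =
        (∑ k ∈ Finset.range (n + 1), dif α β (n - k)) * x ^ n := by
      intro n
      rw [Finset.sum_mul]
      refine Finset.sum_congr rfl fun k hk => ?_
      have hk' : k ≤ n := by simpa [Nat.lt_succ_iff] using hk
      rw [show x ^ n = x ^ k * x ^ (n - k) by rw [← pow_add, Nat.add_sub_cancel' hk']]
      ring
    have hPs : Summable fun n : ℕ => (∑ k ∈ Finset.range (n + 1), dif α β (n - k)) * x ^ n := by
      have := summable_norm_sum_mul_range_of_summable_norm
        (summable_of_coef (c := fun _ => (1 : ℝ)) hone h2.le hx1) hD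
      simp only [hconv] at this
      exact this.of_norm
    simp only [hconv] at hprod
    have hup : ∑' n, (tot α β n : ℝ) * x ^ n ≤ tot α β 0 + (K / δ / (1 - r) + K) := by
      rw [hT.tsum_eq_zero_add]
      have hterm : ∀ n : ℕ, (tot α β (n + 1) : ℝ) * x ^ (n + 1) ≤
          x * ((∑ k ∈ Finset.range (n + 1), dif α β (n - k)) * x ^ n) +
            (6 * (n : ℝ) + 9) * r ^ n := by
        intro n
        have ht := tot_le hadm.1 hadm.2.2.1 (α := α) (β := β) (n + 1)
        simp only [Nat.add_sub_cancel] at ht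
        push_cast at ht
        have hp : x ^ (n + 1) ≤ r ^ n := by
          calc x ^ (n + 1) ≤ x ^ n := pow_le_pow_of_le_one h2.le hx1.le (by omega)
            _ ≤ r ^ n := pow_le_pow_left₀ h2.le h3.le n
        calc (tot α β (n + 1) : ℝ) * x ^ (n + 1)
            ≤ (∑ k ∈ Finset.range (n + 1), dif α β (n - k) + (6 * n + 9)) * x ^ (n + 1) := by
              refine mul_le_mul_of_nonneg_right ?_ (by positivity)
              have : (0 : ℝ) ≤ n := by positivity
              linarith
          _ = x * ((∑ k ∈ Finset.range (n + 1), dif α β (n - k)) * x ^ n) +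
            (6 * (n : ℝ) + 9) * x ^ (n + 1) := by ring
          _ ≤ _ := by gcongr
      have hle := ((summable_nat_add_iff 1).2 hT).tsum_le_tsum hterm ((hPs.mul_left x).add hS)
      rw [(hPs.mul_left x).tsum_add hS, tsum_mul_left, ← hprod] at hle
      simp only [one_mul] at hle
      rw [tsum_geometric_of_lt_one h2.le hx1] at hle
      have hfin : x * ((1 - x)⁻¹ * ∑' n, dif α β n * x ^ n) ≤ K / δ / (1 - r) := by
        have hr1' : 0 < 1 - r := by linarith
        have hx1' : 0 < 1 - x := by linarith
        calc x * ((1 - x)⁻¹ * ∑' n, dif α β n * x ^ n)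
            ≤ 1 * ((1 - r)⁻¹ * (K / δ)) := by
              refine (mul_le_mul_of_nonneg_left (mul_le_mul_of_nonneg_left
                ((le_abs_self _).trans hDb) (by positivity)) h2.le).trans ?_
              gcongr
          _ = _ := by rw [one_mul, mul_comm, div_eq_mul_inv _ (1 - r)]
      simp only [pow_zero, mul_one]
      linarith
    exact hlow.trans hup
  -- the lower bound blows up as `x` increases to `r`
  have hinf : Tendsto (fun x : ℝ => 1 / (1 - x / r)) (nhdsWithin r (Set.Iio r)) atTop := by
    simp only [one_div]
    refine tendsto_inv_nhdsGT_zero.comp (tendsto_nhdsWithin_iff.2 ⟨?_, ?_⟩)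
    · have : Tendsto (fun x : ℝ => 1 - x / r) (nhds r) (nhds (1 - r / r)) := by
        apply Continuous.tendsto
        fun_prop
      rw [div_self hr0.ne', sub_self] at this
      exact this.mono_left nhdsWithin_le_nhds
    · filter_upwards [ev3] with x hx
      have := (div_lt_one hr0).2 hx
      simp only [Set.mem_Ioi]
      linarith
  obtain ⟨x, hx1, hx2⟩ := (key.and (hinf.eventually_gt_atTop
    (tot α β 0 + (K / δ / (1 - r) + K)))).exists
  linarith

/-- If (α,β) is admissible and non-null, then π_x α = π_x β for some x ∈ (0,1). -/
theorem stmt14 (α β : Omega) (hadm : admissible α β) (hnn : 0 < growthRate (addr α β)) :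
    ∃ x ∈ Set.Ioo (0 : ℝ) 1, proj x α = proj x β := by
  have h1 : Real.exp (-growthRate (addr α β)) < 1 := by
    rw [Real.exp_lt_one_iff]; linarith
  refine ⟨_, ⟨Real.exp_pos _, h1⟩, ?_⟩
  have := proj_sub (α := α) (β := β) (Real.exp_pos _).le h1
  rw [knead_zero hadm hnn, mul_zero] at this
  linarith
end

section
/- Let α, β ∈ Ω with α₀ = 0, α₁ = 1, β₀ = 1, and let r ∈ (0,1) satisfy π_r(α) = π_r(β). Then for any finite binary string t of length m ≥ 0 (where tα denotes the concatenation of t with α, etc.): π_r(tα) − π_r(t0β) = r^m (1 − r) π_r(α) > 0, and π_r(t1α) − π_r(tβ) = r^m (1 − r)(1 − π_r(α)) > 0. -/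
/-! Writing `π` for `proj r`, splitting off the first term of the series gives
`π(ω) = (1 - r) ω₀ + r π(shift ω)` (`proj_eq_head_add_shift`). Iterating over a prefix `t` shows that
`π(tσ) - π(tω) = r ^ |t| (π(σ) - π(ω))` (`proj_prepend_sub`), so both identities reduce to the
empty prefix, where `π(0β) = r π(β)`, `π(1α) = (1 - r) + r π(α)` and `π(α) = π(β)` give them.
Since `0 ≤ π ≤ 1`, the same recursion yields positivity: `π(α) = π(β) ≥ 1 - r > 0` because
`β₀ = 1`, and `π(α) = r π(shift α) ≤ r < 1` because `α₀ = 0`. -/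

open Filter Set

/-- Prepend a finite binary string to an infinite one. -/
def prepend (t : List Bool) (ω : Omega) : Omega :=
  fun n => if h : n < t.length then t.get ⟨n, h⟩ else ω (n - t.length)

theorem b2r_nonneg (b : Bool) : 0 ≤ b2r b := by cases b <;> simp [b2r]

theorem b2r_le_one (b : Bool) : b2r b ≤ 1 := by cases b <;> simp [b2r]

theorem summable_b2r_mul_pow {r : ℝ} (h0 : 0 ≤ r) (h1 : r < 1) (ω : Omega) :
    Summable fun k : ℕ => b2r (ω k) * r ^ k :=
  Summable.of_nonneg_of_le (fun k => mul_nonneg (b2r_nonneg _) (pow_nonneg h0 k))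
    (fun k => mul_le_of_le_one_left (pow_nonneg h0 k) (b2r_le_one _))
    (summable_geometric_of_lt_one h0 h1)

theorem proj_nonneg {r : ℝ} (h0 : 0 ≤ r) (h1 : r < 1) (ω : Omega) : 0 ≤ proj r ω :=
  mul_nonneg (by linarith) (tsum_nonneg fun k => mul_nonneg (b2r_nonneg _) (pow_nonneg h0 k))

theorem proj_le_one {r : ℝ} (h0 : 0 ≤ r) (h1 : r < 1) (ω : Omega) : proj r ω ≤ 1 := by
  have h : ∑' k : ℕ, b2r (ω k) * r ^ k ≤ (1 - r)⁻¹ := by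
    rw [← tsum_geometric_of_lt_one h0 h1]
    exact (summable_b2r_mul_pow h0 h1 ω).tsum_le_tsum
      (fun k => mul_le_of_le_one_left (pow_nonneg h0 k) (b2r_le_one _))
      (summable_geometric_of_lt_one h0 h1)
  have hr : 0 < 1 - r := by linarith
  calc proj r ω ≤ (1 - r) * (1 - r)⁻¹ := mul_le_mul_of_nonneg_left h hr.le
    _ = 1 := mul_inv_cancel₀ hr.ne'

theorem proj_eq_head_add_shift {r : ℝ} (h0 : 0 ≤ r) (h1 : r < 1) (ω : Omega) :
    proj r ω = (1 - r) * b2r (ω 0) + r * proj r (shift ω) := by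
  have h : ∑' k : ℕ, b2r (ω (k + 1)) * r ^ (k + 1) = r * ∑' k : ℕ, b2r (ω (k + 1)) * r ^ k := by
    rw [← tsum_mul_left]
    exact tsum_congr fun k => by ring
  unfold proj shift
  rw [(summable_b2r_mul_pow h0 h1 ω).tsum_eq_zero_add, h]
  ring

theorem prepend_nil (ω : Omega) : prepend [] ω = ω := by
  funext n
  simp [prepend]

theorem shift_prepend_cons (b : Bool) (t : List Bool) (ω : Omega) :
    shift (prepend (b :: t) ω) = prepend t ω := by
  funext n
  simp [shift, prepend]

theorem proj_prepend_cons {r : ℝ} (h0 : 0 ≤ r) (h1 : r < 1) (b : Bool) (t : List Bool)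
    (ω : Omega) :
    proj r (prepend (b :: t) ω) = (1 - r) * b2r b + r * proj r (prepend t ω) := by
  rw [proj_eq_head_add_shift h0 h1, shift_prepend_cons]
  simp [prepend]

theorem prepend_append (s t : List Bool) (ω : Omega) :
    prepend (s ++ t) ω = prepend s (prepend t ω) := by
  funext n
  simp only [prepend, List.get_eq_getElem, List.length_append]
  grind

/-- A common prefix `t` contracts differences of projections by `r ^ |t|`. -/
theorem proj_prepend_sub {r : ℝ} (h0 : 0 ≤ r) (h1 : r < 1) (t : List Bool) (σ ω : Omega) :
    proj r (prepend t σ) - proj r (prepend t ω) = r ^ t.length * (proj r σ - proj r ω) := by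
  induction t with
  | nil => simp [prepend_nil]
  | cons b t ih =>
    rw [proj_prepend_cons h0 h1, proj_prepend_cons h0 h1, List.length_cons, pow_succ']
    linear_combination r * ih

/-- If π_r α = π_r β with α beginning 01 and β beginning 1, then for any finite string t of
length m: π_r(tα) - π_r(t0β) = r^m (1-r) π_r(α) > 0 and
π_r(t1α) - π_r(tβ) = r^m (1-r)(1 - π_r(α)) > 0. -/
theorem stmt16 (α β : Omega) (hα0 : α 0 = false) (hα1 : α 1 = true) (hβ0 : β 0 = true)
    (r : ℝ) (hr : r ∈ Set.Ioo (0 : ℝ) 1) (heq : proj r α = proj r β) (t : List Bool) :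
    (proj r (prepend t α) - proj r (prepend (t ++ [false]) β)
        = r ^ t.length * (1 - r) * proj r α ∧
      0 < r ^ t.length * (1 - r) * proj r α) ∧
    (proj r (prepend (t ++ [true]) α) - proj r (prepend t β)
        = r ^ t.length * (1 - r) * (1 - proj r α) ∧
      0 < r ^ t.length * (1 - r) * (1 - proj r α)) := by
  obtain ⟨h0, h1⟩ := hr
  have hpos : 0 < proj r α := by
    rw [heq, proj_eq_head_add_shift h0.le h1, hβ0]
    have := mul_nonneg h0.le (proj_nonneg h0.le h1 (shift β))
    simp only [b2r, if_true]
    linarith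
  have hlt : proj r α < 1 := by
    rw [proj_eq_head_add_shift h0.le h1, hα0]
    have := mul_le_of_le_one_right h0.le (proj_le_one h0.le h1 (shift α))
    simp only [b2r, Bool.false_eq_true, if_false]
    linarith
  have hc : 0 < r ^ t.length * (1 - r) := mul_pos (pow_pos h0 _) (by linarith)
  refine ⟨⟨?_, mul_pos hc hpos⟩, ?_, mul_pos hc (by linarith)⟩
  · rw [prepend_append, proj_prepend_sub h0.le h1, proj_prepend_cons h0.le h1, prepend_nil, ← heq]
    simp only [b2r, Bool.false_eq_true, if_false]
    ring
  · rw [prepend_append, proj_prepend_sub h0.le h1, proj_prepend_cons h0.le h1, prepend_nil, ← heq]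
    simp only [b2r, if_true]
    ring
end
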